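/- arXiv:2004.09333 — 5 statements merged into one kernel-verified Lean document; each statement's English description precedes it below -/
import Mathlib

section
/- Let (E, 𝓕, μ) be a probability space, (𝒳_i)_{i≥0} measurable spaces, X_i : E → 𝒳_i measurable, 𝒴_n = ∏_{j≥n} 𝒳_j and X̄_n(x) = (X_n(x), X_{n+1}(x), ...). Let (δ_n) be nonnegative reals with δ_n → 0, and let r : E → [0,∞) be measurable with ∫ r dμ = 1 satisfying the decorrelation property with constant K ≥ 0 relative to (δ_n): for every n ≥ 0 and every bounded measurable f : 𝒴_n → ℂ, |∫ r·(f∘X̄_n) dμ − ∫ f∘X̄_n dμ| ≤ K·(sup|f|)·δ_n. Let g_j : 𝒴_j → ℝ^d be measurable, S_n = Σ_{j=0}^{n-1} g_j∘X̄_j, and assume ∫|S_n| dμ < ∞ and ∫ r·|S_n| dμ < ∞ for every n (|·| the Euclidean norm). Let ν be the probability measure dν = r dμ and let (b_n) be positive reals with b_n → ∞. Then the laws of S_n/b_n under μ converge weakly to some probability measure on ℝ^d as n → ∞ if and only if the laws of S_n/b_n under ν converge weakly, and in that case the two limits coincide. -/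
open MeasureTheory Filter Topology Complex
open scoped BigOperators ENNReal RealInnerProductSpace

/-- `X̄ₙ(x) = (Xₙ(x), Xₙ₊₁(x), ...)`. -/
def Xbar {E : Type*} {𝒳 : ℕ → Type*} (X : ∀ i, E → 𝒳 i) (n : ℕ) (x : E) :
    ∀ j, 𝒳 (n + j) := fun j => X (n + j) x

/-- The decorrelation property with constant `K` relative to the rates `δ`: for every `n`
and every bounded measurable `f : 𝒴ₙ → ℂ`,
`|∫ s·(f∘X̄ₙ) dμ − ∫ s dμ · ∫ f∘X̄ₙ dμ| ≤ K · sup|f| · δₙ`. -/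
def Decorrelates {E : Type*} [MeasurableSpace E] (μ : Measure E) {𝒳 : ℕ → Type*}
    [∀ i, MeasurableSpace (𝒳 i)] (X : ∀ i, E → 𝒳 i) (s : E → ℝ) (K : ℝ) (δ : ℕ → ℝ) : Prop :=
  ∀ (n : ℕ) (f : (∀ j, 𝒳 (n + j)) → ℂ) (C : ℝ), Measurable f → (∀ y, ‖f y‖ ≤ C) →
    ‖(∫ x, (s x : ℂ) * f (Xbar X n x) ∂μ) -
        ((∫ x, s x ∂μ : ℝ) : ℂ) * ∫ x, f (Xbar X n x) ∂μ‖ ≤ K * C * δ n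

/-- Convergence in distribution (weak convergence of laws) of `Wₙ` under `μ` towards `P`. -/
def TendstoInDistribution {E G : Type*} [MeasurableSpace E] [TopologicalSpace G] [MeasurableSpace G]
    (μ : Measure E) (W : ℕ → E → G) (P : Measure G) : Prop :=
  ∀ h : BoundedContinuousFunction G ℝ,
    Tendsto (fun n => ∫ x, h (W n x) ∂μ) atTop (𝓝 (∫ y, h y ∂P))


theorem eag_measurable_cast {𝒳 : ℕ → Type*} [∀ i, MeasurableSpace (𝒳 i)] {a b : ℕ} (h : a = b) :
    Measurable (fun z : 𝒳 a => (h ▸ z : 𝒳 b)) := by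
  subst h; exact measurable_id

theorem eag_cast_eq {E : Type*} {𝒳 : ℕ → Type*} (X : ∀ i, E → 𝒳 i) {a b : ℕ} (h : a = b)
    (x : E) : (h ▸ X a x : 𝒳 b) = X b x := by
  subst h; rfl

theorem eag_tail {E : Type*} {𝒳 : ℕ → Type*} [∀ i, MeasurableSpace (𝒳 i)]
    (X : ∀ i, E → 𝒳 i) {d : ℕ} (g : ∀ j, (∀ i, 𝒳 (j + i)) → EuclideanSpace ℝ (Fin d))
    (hg : ∀ j, Measurable (g j)) (m k : ℕ) :
    ∃ F : (∀ i, 𝒳 (m + i)) → EuclideanSpace ℝ (Fin d), Measurable F ∧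
      ∀ x, ∑ j ∈ Finset.range (m + k), g j (Xbar X j x) =
        ∑ j ∈ Finset.range m, g j (Xbar X j x) + F (Xbar X m x) := by
  refine ⟨fun y => ∑ j ∈ Finset.range k,
    g (m + j) (fun i => ((Nat.add_assoc m j i).symm ▸ y (j + i) : 𝒳 (m + j + i))), ?_, ?_⟩
  · refine Finset.measurable_sum _ fun j _ => (hg _).comp ?_
    refine measurable_pi_lambda _ fun i => ?_
    exact (eag_measurable_cast (Nat.add_assoc m j i).symm).comp (measurable_pi_apply (j + i))
  · intro x
    rw [Finset.sum_range_add]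
    congr 1
    refine Finset.sum_congr rfl fun j _ => ?_
    congr 1
    funext i
    exact (eag_cast_eq X (Nat.add_assoc m j i).symm x).symm

theorem eag_transfer {E G : Type*} [MeasurableSpace E] [PseudoMetricSpace G] [MeasurableSpace G]
    [BorelSpace G] (μ ν : Measure E) [IsProbabilityMeasure μ] [IsProbabilityMeasure ν]
    (W : ℕ → E → G) (hW : ∀ n, Measurable (W n))
    (hd : ∀ f : BoundedContinuousFunction G ℝ, (∃ L, LipschitzWith L f) →
      Tendsto (fun n => ∫ x, f (W n x) ∂ν - ∫ x, f (W n x) ∂μ) atTop (𝓝 0))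
    (P : Measure G) [IsProbabilityMeasure P]
    (h : _root_.TendstoInDistribution μ W P) : _root_.TendstoInDistribution ν W P := by
  have hp : ∀ n, IsProbabilityMeasure (ν.map (W n)) := fun n =>
    Measure.isProbabilityMeasure_map (hW n).aemeasurable
  obtain ⟨Q, hQ⟩ : ∃ Q : ℕ → ProbabilityMeasure G, ∀ n, (Q n : Measure G) = ν.map (W n) :=
    ⟨fun n => ⟨_, hp n⟩, fun n => rfl⟩
  obtain ⟨P', hP'⟩ : ∃ P' : ProbabilityMeasure G, (P' : Measure G) = P :=
    ⟨⟨P, inferInstance⟩, rfl⟩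
  have key : Tendsto Q atTop (𝓝 P') := by
    rw [tendsto_iff_forall_lipschitz_integral_tendsto]
    rintro f ⟨C, hC⟩ ⟨L, hL⟩
    let f' : BoundedContinuousFunction G ℝ := ⟨⟨f, hL.continuous⟩, ⟨C, hC⟩⟩
    have h1 := (hd f' ⟨L, hL⟩).add (h f')
    simp only [sub_add_cancel, zero_add] at h1
    rw [hP']
    refine h1.congr fun n => ?_
    rw [hQ]
    exact (integral_map (hW n).aemeasurable
      hL.continuous.measurable.aestronglyMeasurable).symm
  rw [ProbabilityMeasure.tendsto_iff_forall_integral_tendsto, hP'] at key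
  intro f
  refine (key f).congr fun n => ?_
  rw [hQ]
  exact integral_map (hW n).aemeasurable f.continuous.measurable.aestronglyMeasurable

/-- **Non-stationary Eagleson theorem** (Theorem 2.2, case `r ∈ B`): if `r` is a probability
density with respect to `μ` satisfying the decorrelation property, `Sₙ = ∑_{j<n} gⱼ∘X̄ⱼ`
is integrable under `μ` and `r·|Sₙ|` is `μ`-integrable, and `bₙ → ∞`, then `Sₙ/bₙ` converges
in distribution under `μ` (to some probability measure) iff it converges in distribution
under `ν = r dμ`, and the limits coincide. -/
theorem eagleson_nonstationary
    {E : Type*} [MeasurableSpace E] (μ : Measure E) [IsProbabilityMeasure μ]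
    {𝒳 : ℕ → Type*} [∀ i, MeasurableSpace (𝒳 i)]
    (X : ∀ i, E → 𝒳 i) (hX : ∀ i, Measurable (X i))
    (δ : ℕ → ℝ) (hδ0 : ∀ n, 0 ≤ δ n) (hδ : Tendsto δ atTop (𝓝 0))
    (r : E → ℝ) (hrmeas : Measurable r) (hr0 : ∀ x, 0 ≤ r x) (hr1 : ∫ x, r x ∂μ = 1)
    (K : ℝ) (hK : 0 ≤ K) (hdec : Decorrelates μ X r K δ)
    {d : ℕ} (g : ∀ j, (∀ i, 𝒳 (j + i)) → EuclideanSpace ℝ (Fin d))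
    (hg : ∀ j, Measurable (g j))
    (S : ℕ → E → EuclideanSpace ℝ (Fin d))
    (hS : ∀ n x, S n x = ∑ j ∈ Finset.range n, g j (Xbar X j x))
    (hSint : ∀ n, Integrable (S n) μ)
    (hSrint : ∀ n, Integrable (fun x => r x * ‖S n x‖) μ)
    (b : ℕ → ℝ) (hb0 : ∀ n, 0 < b n) (hb : Tendsto b atTop atTop)
    (ν : Measure E) (hν : ν = μ.withDensity (fun x => ENNReal.ofReal (r x))) :
    ((∃ P : Measure (EuclideanSpace ℝ (Fin d)), IsProbabilityMeasure P ∧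
        TendstoInDistribution μ (fun n x => (b n)⁻¹ • S n x) P) ↔
      (∃ P : Measure (EuclideanSpace ℝ (Fin d)), IsProbabilityMeasure P ∧
        TendstoInDistribution ν (fun n x => (b n)⁻¹ • S n x) P)) ∧
    (∀ P Q : Measure (EuclideanSpace ℝ (Fin d)),
      IsProbabilityMeasure P → IsProbabilityMeasure Q →
      TendstoInDistribution μ (fun n x => (b n)⁻¹ • S n x) P →
      TendstoInDistribution ν (fun n x => (b n)⁻¹ • S n x) Q → P = Q) := by
  have hrint : Integrable r μ := by
    by_contra hc
    rw [integral_undef hc] at hr1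
    norm_num at hr1
  have hνint : ∀ f : E → ℝ, ∫ x, f x ∂ν = ∫ x, r x * f x ∂μ := by
    intro f
    have := integral_withDensity_eq_integral_smul (μ := μ) hrmeas.real_toNNReal f
    rw [hν]
    refine this.trans (integral_congr_ae (ae_of_all _ fun x => ?_))
    simp [NNReal.smul_def, hr0 x]
  have hνp : IsProbabilityMeasure ν := by
    constructor
    rw [hν, withDensity_apply _ MeasurableSet.univ, Measure.restrict_univ,
      ← ofReal_integral_eq_lintegral_ofReal hrint (ae_of_all _ hr0), hr1]
    simp
  have hXb : ∀ m, Measurable (Xbar X m) := fun m => measurable_pi_lambda _ fun i => hX _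
  have hSm : ∀ n, Measurable (S n) := by
    intro n
    have : S n = fun x => ∑ j ∈ Finset.range n, g j (Xbar X j x) := funext (hS n)
    rw [this]
    exact Finset.measurable_sum _ fun j _ => (hg j).comp (hXb j)
  have hW : ∀ n, Measurable (fun x => (b n)⁻¹ • S n x) := fun n => (hSm n).const_smul (b n)⁻¹
  have hd : ∀ f : BoundedContinuousFunction (EuclideanSpace ℝ (Fin d)) ℝ,
      (∃ L, LipschitzWith L f) →
      Tendsto (fun n => ∫ x, f ((b n)⁻¹ • S n x) ∂ν - ∫ x, f ((b n)⁻¹ • S n x) ∂μ)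
        atTop (𝓝 0) := by
    rintro f ⟨L, hL⟩
    have hrb : ∀ φ : E → ℝ, Measurable φ → (∀ x, ‖φ x‖ ≤ ‖f‖) →
        Integrable (fun x => r x * φ x) μ ∧ Integrable φ μ := by
      intro φ hφ hb
      refine ⟨?_, Integrable.of_bound hφ.aestronglyMeasurable ‖f‖ (ae_of_all _ hb)⟩
      exact hrint.mul_bdd (c := ‖f‖) hφ.aestronglyMeasurable (ae_of_all _ hb)
    -- main estimate
    have main : ∀ m k : ℕ,
        |∫ x, f ((b (m + k))⁻¹ • S (m + k) x) ∂ν - ∫ x, f ((b (m + k))⁻¹ • S (m + k) x) ∂μ| ≤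
        (b (m + k))⁻¹ * (L * (∫ x, r x * ‖S m x‖ ∂μ + ∫ x, ‖S m x‖ ∂μ)) + K * ‖f‖ * δ m := by
      intro m k
      obtain ⟨F, hF, hFe⟩ := eag_tail X g hg m k
      set c := (b (m + k))⁻¹ with hc
      have hc0 : 0 ≤ c := inv_nonneg.2 (hb0 _).le
      have hST : ∀ x, S (m + k) x = S m x + F (Xbar X m x) := by
        intro x; rw [hS, hS, hFe]
      have hf1m : Measurable (fun x => f (c • S (m + k) x)) :=
        f.continuous.measurable.comp ((hSm _).const_smul c)
      have hf2m : Measurable (fun x => f (c • F (Xbar X m x))) :=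
        f.continuous.measurable.comp ((hF.comp (hXb m)).const_smul c)
      obtain ⟨i1, j1⟩ := hrb _ hf1m (fun x => f.norm_coe_le_norm _)
      obtain ⟨i2, j2⟩ := hrb _ hf2m (fun x => f.norm_coe_le_norm _)
      have hpt : ∀ x, |f (c • S (m + k) x) - f (c • F (Xbar X m x))| ≤ c * L * ‖S m x‖ := by
        intro x
        have := hL.dist_le_mul (c • S (m + k) x) (c • F (Xbar X m x))
        rw [Real.dist_eq, dist_eq_norm, ← smul_sub, hST, add_sub_cancel_right, norm_smul,
          Real.norm_of_nonneg hc0] at this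
        rw [hST]
        linarith
      have e1 : |∫ x, r x * f (c • S (m + k) x) ∂μ - ∫ x, r x * f (c • F (Xbar X m x)) ∂μ| ≤
          c * L * ∫ x, r x * ‖S m x‖ ∂μ := by
        rw [← integral_sub i1 i2, ← integral_const_mul, ← Real.norm_eq_abs]
        refine norm_integral_le_of_norm_le ((hSrint m).const_mul _) (ae_of_all _ fun x => ?_)
        rw [← mul_sub, Real.norm_eq_abs, abs_mul, abs_of_nonneg (hr0 x)]
        nlinarith [hpt x, hr0 x, mul_le_mul_of_nonneg_left (hpt x) (hr0 x)]
      have e2 : |∫ x, f (c • S (m + k) x) ∂μ - ∫ x, f (c • F (Xbar X m x)) ∂μ| ≤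
          c * L * ∫ x, ‖S m x‖ ∂μ := by
        rw [← integral_sub j1 j2, ← integral_const_mul, ← Real.norm_eq_abs]
        exact norm_integral_le_of_norm_le ((hSint m).norm.const_mul _) (ae_of_all _ hpt)
      have e3 : |∫ x, r x * f (c • F (Xbar X m x)) ∂μ - ∫ x, f (c • F (Xbar X m x)) ∂μ| ≤
          K * ‖f‖ * δ m := by
        have := hdec m (fun y => ((f (c • F y) : ℝ) : ℂ)) ‖f‖
          (Complex.measurable_ofReal.comp
            (f.continuous.measurable.comp (hF.const_smul c)))
          (fun y => by rw [Complex.norm_real]; exact f.norm_coe_le_norm _)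
        simp only [← Complex.ofReal_mul, integral_complex_ofReal, ← Complex.ofReal_sub, hr1,
          one_mul, Complex.norm_real, Real.norm_eq_abs] at this
        exact this
      rw [hνint]
      rw [abs_le] at e1 e2 e3 ⊢
      constructor <;> nlinarith [e1.1, e1.2, e2.1, e2.2, e3.1, e3.2]
    rw [Metric.tendsto_atTop]
    intro ε hε
    have t1 : Tendsto (fun m => K * ‖f‖ * δ m) atTop (𝓝 0) := by
      simpa using hδ.const_mul (K * ‖f‖)
    obtain ⟨m, hm⟩ := (t1.eventually_lt_const (half_pos hε)).exists
    have t2 : Tendsto (fun n => (b n)⁻¹ *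
        (L * (∫ x, r x * ‖S m x‖ ∂μ + ∫ x, ‖S m x‖ ∂μ))) atTop (𝓝 0) := by
      simpa using (tendsto_inv_atTop_zero.comp hb).mul_const
        (L * (∫ x, r x * ‖S m x‖ ∂μ + ∫ x, ‖S m x‖ ∂μ))
    obtain ⟨N, hN⟩ := eventually_atTop.1 (t2.eventually_lt_const (half_pos hε))
    refine ⟨max N m, fun n hn => ?_⟩
    obtain ⟨k, rfl⟩ := Nat.exists_eq_add_of_le ((le_max_right N m).trans hn)
    rw [Real.dist_eq, sub_zero]
    have := main m k
    have := hN (m + k) ((le_max_left N m).trans hn)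
    linarith
  have hd' : ∀ f : BoundedContinuousFunction (EuclideanSpace ℝ (Fin d)) ℝ,
      (∃ L, LipschitzWith L f) →
      Tendsto (fun n => ∫ x, f ((b n)⁻¹ • S n x) ∂μ - ∫ x, f ((b n)⁻¹ • S n x) ∂ν)
        atTop (𝓝 0) := by
    intro f hf
    simpa using (hd f hf).neg
  refine ⟨⟨?_, ?_⟩, ?_⟩
  · rintro ⟨P, hP, h⟩
    exact ⟨P, hP, eag_transfer μ ν _ hW hd P h⟩
  · rintro ⟨P, hP, h⟩
    exact ⟨P, hP, eag_transfer ν μ _ hW hd' P h⟩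
  · intro P Q hP hQ h1 h2
    have h3 := eag_transfer μ ν _ hW hd P h1
    exact ext_of_forall_integral_eq_of_IsFiniteMeasure fun f =>
      tendsto_nhds_unique (h3 f) (h2 f)
end

section
/- Let (E, 𝓕, μ) be a probability space, (𝒳_i)_{i≥0} measurable spaces, X_i : E → 𝒳_i measurable, 𝒴_n = ∏_{j≥n} 𝒳_j and X̄_n(x) = (X_n(x), X_{n+1}(x), ...). Let (δ_n) be nonnegative reals with δ_n → 0 and let r : E → [0,∞) with ∫ r dμ = 1 satisfy the decorrelation property with constant K ≥ 0 relative to (δ_n). Let g_j : 𝒴_j → ℝ^d be measurable, S_n = Σ_{j=0}^{n-1} g_j∘X̄_j, with ∫|S_n| dμ < ∞ and ∫ r·|S_n| dμ < ∞ for every n, and let (b_n) be positive reals with b_n → ∞. Then for every t ∈ ℝ^d, lim_{n→∞} | ∫ r(x) e^{i⟨t, S_n(x)⟩/b_n} dμ(x) − ∫ e^{i⟨t, S_n(x)⟩/b_n} dμ(x) | = 0. -/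
open MeasureTheory Filter Topology Complex
open scoped BigOperators ENNReal RealInnerProductSpace

theorem shift_exists {E : Type*} {𝒳 : ℕ → Type*} [∀ i, MeasurableSpace (𝒳 i)]
    (X : ∀ i, E → 𝒳 i) (k j : ℕ) (hkj : k ≤ j) :
    ∃ h : (∀ i, 𝒳 (k + i)) → (∀ i, 𝒳 (j + i)), Measurable h ∧
      ∀ x, h (Xbar X k x) = Xbar X j x := by
  obtain ⟨m, rfl⟩ := Nat.exists_eq_add_of_le hkj
  have key : ∀ a c : ℕ, a = c → ∃ φ : 𝒳 a → 𝒳 c, Measurable φ ∧ ∀ x, φ (X a x) = X c x := by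
    rintro a c rfl
    exact ⟨id, measurable_id, fun x => rfl⟩
  choose φ hφ hφ2 using fun i => key (k + (m + i)) (k + m + i) (Nat.add_assoc k m i).symm
  refine ⟨fun y i => φ i (y (m + i)), ?_, ?_⟩
  · exact measurable_pi_lambda _ fun i => (hφ i).comp (measurable_pi_apply _)
  · intro x
    funext i
    exact hφ2 i x

theorem tail_exists {E : Type*} {𝒳 : ℕ → Type*} [∀ i, MeasurableSpace (𝒳 i)]
    (X : ∀ i, E → 𝒳 i) {d : ℕ} (g : ∀ j, (∀ i, 𝒳 (j + i)) → EuclideanSpace ℝ (Fin d))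
    (hg : ∀ j, Measurable (g j)) (k n : ℕ) (hkn : k ≤ n) :
    ∃ F : (∀ i, 𝒳 (k + i)) → EuclideanSpace ℝ (Fin d), Measurable F ∧
      ∀ x, ∑ j ∈ Finset.range n, g j (Xbar X j x) =
        ∑ j ∈ Finset.range k, g j (Xbar X j x) + F (Xbar X k x) := by
  induction n, hkn using Nat.le_induction with
  | base => exact ⟨fun _ => 0, measurable_const, fun x => by simp⟩
  | succ n hn ih =>
    obtain ⟨F, hF, hF2⟩ := ih
    obtain ⟨h, hh, hh2⟩ := shift_exists X k n hn
    refine ⟨fun y => F y + g n (h y), hF.add ((hg n).comp hh), fun x => ?_⟩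
    simp only [Finset.sum_range_succ, hF2, hh2, add_assoc]

theorem exp_diff_bound (a c : ℝ) :
    ‖Complex.exp ((a + c : ℝ) * Complex.I) - Complex.exp ((c : ℝ) * Complex.I)‖ ≤ |a| := by
  have : Complex.exp ((a + c : ℝ) * Complex.I) - Complex.exp ((c : ℝ) * Complex.I)
      = Complex.exp ((c : ℝ) * Complex.I) * (Complex.exp (Complex.I * a) - 1) := by
    rw [mul_sub, ← Complex.exp_add]
    push_cast
    ring_nf
  rw [this, norm_mul, Complex.norm_exp_ofReal_mul_I, one_mul]
  simpa using Real.norm_exp_I_mul_ofReal_sub_one_le (x := a)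

/-- Key characteristic-function estimate in the proof of Theorem 2.2: under the
decorrelation assumption for the density `r`, for every `t ∈ ℝ^d`,
`|∫ r e^{i⟨t,Sₙ⟩/bₙ} dμ − ∫ e^{i⟨t,Sₙ⟩/bₙ} dμ| → 0` as `n → ∞`. -/
theorem eagleson_charfun_estimate
    {E : Type*} [MeasurableSpace E] (μ : Measure E) [IsProbabilityMeasure μ]
    {𝒳 : ℕ → Type*} [∀ i, MeasurableSpace (𝒳 i)]
    (X : ∀ i, E → 𝒳 i) (hX : ∀ i, Measurable (X i))
    (δ : ℕ → ℝ) (hδ0 : ∀ n, 0 ≤ δ n) (hδ : Tendsto δ atTop (𝓝 0))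
    (r : E → ℝ) (hrmeas : Measurable r) (hr0 : ∀ x, 0 ≤ r x) (hr1 : ∫ x, r x ∂μ = 1)
    (K : ℝ) (hK : 0 ≤ K) (hdec : Decorrelates μ X r K δ)
    {d : ℕ} (g : ∀ j, (∀ i, 𝒳 (j + i)) → EuclideanSpace ℝ (Fin d))
    (hg : ∀ j, Measurable (g j))
    (S : ℕ → E → EuclideanSpace ℝ (Fin d))
    (hS : ∀ n x, S n x = ∑ j ∈ Finset.range n, g j (Xbar X j x))
    (hSint : ∀ n, Integrable (S n) μ)
    (hSrint : ∀ n, Integrable (fun x => r x * ‖S n x‖) μ)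
    (b : ℕ → ℝ) (hb0 : ∀ n, 0 < b n) (hb : Tendsto b atTop atTop) :
    ∀ t : EuclideanSpace ℝ (Fin d),
      Tendsto (fun n =>
        ‖(∫ x, (r x : ℂ) * Complex.exp ((⟪t, S n x⟫ / b n : ℝ) * Complex.I) ∂μ) -
            ∫ x, Complex.exp ((⟪t, S n x⟫ / b n : ℝ) * Complex.I) ∂μ‖)
        atTop (𝓝 0) := by
  intro t
  have hrint : Integrable r μ := by
    by_contra h
    rw [integral_undef h] at hr1
    exact zero_ne_one hr1
  have hXm : ∀ n, Measurable (Xbar X n) := fun n => measurable_pi_lambda _ fun i => hX _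
  have hSm : ∀ n, Measurable (S n) := by
    intro n
    have : S n = fun x => ∑ j ∈ Finset.range n, g j (Xbar X j x) := funext (hS n)
    rw [this]
    exact Finset.measurable_sum _ fun j _ => (hg j).comp (hXm j)
  have main : ∀ k n, k ≤ n →
      ‖(∫ x, (r x : ℂ) * Complex.exp ((⟪t, S n x⟫ / b n : ℝ) * Complex.I) ∂μ) -
        ∫ x, Complex.exp ((⟪t, S n x⟫ / b n : ℝ) * Complex.I) ∂μ‖ ≤
      (‖t‖ * ((∫ x, r x * ‖S k x‖ ∂μ) + ∫ x, ‖S k x‖ ∂μ)) / b n + K * δ k := by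
    intro k n hkn
    obtain ⟨F, hF, hF2⟩ := tail_exists X g hg k n hkn
    have hSn : ∀ x, S n x = S k x + F (Xbar X k x) := fun x => by rw [hS, hS, hF2]
    let f : (∀ i, 𝒳 (k + i)) → ℂ := fun y => Complex.exp ((⟪t, F y⟫ / b n : ℝ) * Complex.I)
    have hfm : Measurable f := by
      have : Measurable fun y => ⟪t, F y⟫ := measurable_const.inner hF
      fun_prop
    have hf1 : ∀ y, ‖f y‖ ≤ 1 := fun y => (Complex.norm_exp_ofReal_mul_I _).le
    let e : E → ℂ := fun x => Complex.exp ((⟪t, S n x⟫ / b n : ℝ) * Complex.I)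
    have hem : Measurable e := by
      have : Measurable fun x => ⟪t, S n x⟫ := measurable_const.inner (hSm n)
      fun_prop
    have he1 : ∀ x, ‖e x‖ ≤ 1 := fun y => (Complex.norm_exp_ofReal_mul_I _).le
    have hfXm : Measurable fun x => f (Xbar X k x) := hfm.comp (hXm k)
    have hd := hdec k f 1 hfm hf1
    rw [hr1] at hd
    simp only [Complex.ofReal_one, one_mul, mul_one] at hd
    have hef : ∀ x, ‖e x - f (Xbar X k x)‖ ≤ ‖t‖ * ‖S k x‖ / b n := by
      intro x
      have h1 := exp_diff_bound (⟪t, S k x⟫ / b n) (⟪t, F (Xbar X k x)⟫ / b n)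
      have h2 : |⟪t, S k x⟫ / b n| ≤ ‖t‖ * ‖S k x‖ / b n := by
        rw [abs_div, abs_of_pos (hb0 n)]
        exact div_le_div_of_nonneg_right (abs_real_inner_le_norm _ _) (hb0 n).le
      have h3 : e x = Complex.exp ((⟪t, S k x⟫ / b n + ⟪t, F (Xbar X k x)⟫ / b n : ℝ) * Complex.I) := by
        simp only [e]
        rw [hSn, inner_add_right, add_div]
      rw [h3]
      exact h1.trans h2
    have hei : Integrable e μ :=
      Integrable.of_bound hem.aestronglyMeasurable 1 (Eventually.of_forall he1)
    have hfi : Integrable (fun x => f (Xbar X k x)) μ :=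
      Integrable.of_bound hfXm.aestronglyMeasurable 1 (Eventually.of_forall fun x => hf1 _)
    have hrei : Integrable (fun x => (r x : ℂ) * e x) μ :=
      hrint.ofReal.mul_bdd (c := 1) hem.aestronglyMeasurable (Eventually.of_forall he1)
    have hrfi : Integrable (fun x => (r x : ℂ) * f (Xbar X k x)) μ :=
      hrint.ofReal.mul_bdd (c := 1) hfXm.aestronglyMeasurable (Eventually.of_forall fun x => hf1 _)
    have b1 : ‖(∫ x, (r x : ℂ) * e x ∂μ) - ∫ x, (r x : ℂ) * f (Xbar X k x) ∂μ‖ ≤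
        ‖t‖ / b n * ∫ x, r x * ‖S k x‖ ∂μ := by
      rw [← integral_sub hrei hrfi, ← integral_const_mul]
      refine norm_integral_le_of_norm_le ((hSrint k).const_mul _) (Eventually.of_forall fun x => ?_)
      rw [← mul_sub, norm_mul, Complex.norm_real, Real.norm_of_nonneg (hr0 x)]
      calc r x * ‖e x - f (Xbar X k x)‖ ≤ r x * (‖t‖ * ‖S k x‖ / b n) :=
            mul_le_mul_of_nonneg_left (hef x) (hr0 x)
        _ = _ := by ring
    have b2 : ‖(∫ x, e x ∂μ) - ∫ x, f (Xbar X k x) ∂μ‖ ≤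
        ‖t‖ / b n * ∫ x, ‖S k x‖ ∂μ := by
      rw [← integral_sub hei hfi, ← integral_const_mul]
      refine norm_integral_le_of_norm_le ((hSint k).norm.const_mul _)
        (Eventually.of_forall fun x => ?_)
      exact (hef x).trans (le_of_eq (by ring))
    change ‖(∫ x, (r x : ℂ) * e x ∂μ) - ∫ x, e x ∂μ‖ ≤ _
    generalize (∫ x, (r x : ℂ) * e x ∂μ) = A at *
    generalize (∫ x, (r x : ℂ) * f (Xbar X k x) ∂μ) = B at *
    generalize (∫ x, e x ∂μ) = C at *
    generalize (∫ x, f (Xbar X k x) ∂μ) = D at *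
    have : A - C = (A - B) + (B - D) - (C - D) := by ring
    rw [this]
    have h4 := norm_sub_le ((A - B) + (B - D)) (C - D)
    have h5 := norm_add_le (A - B) (B - D)
    have h6 : (‖t‖ * ((∫ x, r x * ‖S k x‖ ∂μ) + ∫ x, ‖S k x‖ ∂μ)) / b n =
      ‖t‖ / b n * (∫ x, r x * ‖S k x‖ ∂μ) + ‖t‖ / b n * ∫ x, ‖S k x‖ ∂μ := by ring
    rw [h6]
    linarith
  rw [Metric.tendsto_atTop]
  intro ε hε
  have hKδ : Tendsto (fun k => K * δ k) atTop (𝓝 0) := by simpa using hδ.const_mul K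
  obtain ⟨k, hk⟩ := (hKδ.eventually_lt_const (half_pos hε)).exists
  have hlim := (tendsto_const_nhds (x := ‖t‖ * ((∫ x, r x * ‖S k x‖ ∂μ) + ∫ x, ‖S k x‖ ∂μ))).div_atTop hb
  obtain ⟨N, hN⟩ := eventually_atTop.1 (hlim.eventually_lt_const (half_pos hε))
  refine ⟨max N k, fun n hn => ?_⟩
  have h1 := main k n ((le_max_right _ _).trans hn)
  have h2 := hN n ((le_max_left _ _).trans hn)
  rw [Real.dist_eq, sub_zero, abs_of_nonneg (norm_nonneg _)]
  linarith
end

section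
/- There exists an absolute constant c > 0 with the following property. Let X and Y be real-valued random variables with characteristic functions φ_X and φ_Y, and let Z be a real-valued random variable whose law is absolutely continuous with respect to Lebesgue measure with a bounded density f_Z. Then for every T > 0, d_K(X,Y) ≤ 4c·d_K(Y,Z) + ∫_{−T}^{T} | (φ_X(t) − φ_Y(t)) / t | dt + 2‖f_Z‖_∞ c² / T, where d_K(U,V) = sup_{t∈ℝ} |P(U ≤ t) − P(V ≤ t)| is the Kolmogorov distance and ‖f_Z‖_∞ = sup f_Z. -/
open MeasureTheory Filter Topology Complex
open scoped ENNReal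

/-- The characteristic function of a law `μ` on `ℝ`: `φ_μ(t) = ∫ e^{itx} dμ(x)`. -/
noncomputable def charFn (μ : Measure ℝ) (t : ℝ) : ℂ :=
  ∫ x, Complex.exp ((t * x : ℝ) * Complex.I) ∂μ

/-- The Kolmogorov (uniform) distance between two laws on `ℝ`:
`d_K(μ,ν) = sup_t |μ(-∞,t] − ν(-∞,t]|`. -/
noncomputable def kolDist (μ ν : Measure ℝ) : ℝ :=
  ⨆ t : ℝ, |(μ (Set.Iic t)).toReal - (ν (Set.Iic t)).toReal|

noncomputable def kap (T v : ℝ) : ℝ := (1 - Real.cos (T * v)) / (T * v ^ 2)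

lemma kap_nonneg {T : ℝ} (hT : 0 < T) (v : ℝ) : 0 ≤ kap T v := by
  unfold kap
  have := Real.cos_le_one (T * v)
  exact div_nonneg (by linarith) (by positivity)

lemma kap_le_half {T : ℝ} (hT : 0 < T) (v : ℝ) : kap T v ≤ T / 2 := by
  unfold kap
  rcases eq_or_ne v 0 with rfl | hv
  · simp; positivity
  have := Real.one_sub_sq_div_two_le_cos (x := T * v)
  rw [div_le_iff₀ (by positivity)]
  nlinarith

lemma kap_le_inv {T : ℝ} (hT : 0 < T) (v : ℝ) : kap T v ≤ 2 / T * (v ^ 2)⁻¹ := by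
  unfold kap
  rcases eq_or_ne v 0 with rfl | hv
  · simp
  have := Real.neg_one_le_cos (T * v)
  calc (1 - Real.cos (T * v)) / (T * v ^ 2) ≤ 2 / (T * v ^ 2) := by
        gcongr; linarith
    _ = _ := by field_simp

lemma kap_ge {T : ℝ} (hT : 0 < T) {v : ℝ} (hv : v ≠ 0) (h : |v| ≤ Real.pi / T) :
    2 * T / Real.pi ^ 2 ≤ kap T v := by
  unfold kap
  have h1 : |T * v| ≤ Real.pi := by
    rw [abs_mul, abs_of_pos hT]
    rw [le_div_iff₀ hT] at h; linarith
  have := Real.cos_le_one_sub_mul_cos_sq h1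
  rw [le_div_iff₀ (by positivity)]
  calc _ = 2 / Real.pi ^ 2 * (T * v) ^ 2 := by ring
    _ ≤ _ := by linarith

lemma kap_meas (T : ℝ) : Measurable (kap T) := by
  unfold kap
  fun_prop

lemma kap_integrable {T : ℝ} (hT : 0 < T) : Integrable (kap T) := by
  refine (integrable_inv_one_add_sq.const_mul (T / 2 + 2 / T)).mono' (kap_meas T).aestronglyMeasurable ?_
  refine .of_forall fun v => ?_
  rw [Real.norm_of_nonneg (kap_nonneg hT v), ← div_eq_mul_inv, le_div_iff₀ (by positivity)]
  have h1 := kap_le_half hT v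
  have h2 : kap T v * v ^ 2 ≤ 2 / T := by
    rcases eq_or_ne v 0 with rfl | hv
    · simp; positivity
    have := kap_le_inv hT v
    rwa [← div_eq_mul_inv, le_div_iff₀ (by positivity)] at this
  linarith

lemma kap_neg (T v : ℝ) : kap T (-v) = kap T v := by
  simp [kap]

lemma kap_out {T : ℝ} (hT : 0 < T) {a : ℝ} (ha : 0 < a) :
    ∫ v in (Set.Icc (-a) a)ᶜ, kap T v ≤ 4 / (T * a) := by
  have h1 : ∫ v in Set.Ioi a, kap T v ≤ 2 / (T * a) := by
    have hi : IntegrableOn (fun v : ℝ => 2 / T * v ^ (-2 : ℝ)) (Set.Ioi a) :=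
      (integrableOn_Ioi_rpow_of_lt (by norm_num) ha).const_mul _
    calc _ ≤ ∫ v in Set.Ioi a, 2 / T * v ^ (-2 : ℝ) := by
          refine setIntegral_mono_on (kap_integrable hT).integrableOn hi measurableSet_Ioi ?_
          intro v hv
          have hv : 0 < v := ha.trans hv
          have := kap_le_inv hT v
          rw [Real.rpow_neg hv.le]
          simpa using this
      _ = _ := by
          rw [integral_const_mul, integral_Ioi_rpow_of_lt (by norm_num) ha]
          norm_num
          rw [Real.rpow_neg_one]
          field_simp
  have h2 : ∫ v in Set.Iio (-a), kap T v = ∫ v in Set.Ioi a, kap T v := by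
    rw [← integral_Iic_eq_integral_Iio, ← integral_comp_neg_Ioi]
    simp [kap_neg]
  have h3 : (Set.Icc (-a) a)ᶜ = Set.Iio (-a) ∪ Set.Ioi a := by
    ext v; simp [Set.mem_Icc]; grind
  rw [h3, setIntegral_union _ measurableSet_Ioi (kap_integrable hT).integrableOn
    (kap_integrable hT).integrableOn, h2]
  · calc _ ≤ 2 / (T * a) + 2 / (T * a) := by gcongr
      _ = _ := by ring
  · rw [Set.disjoint_left]; intro v hv hv'
    simp at hv hv'; linarith

lemma kap_in_le {T : ℝ} (hT : 0 < T) {a : ℝ} (ha : 0 < a) :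
    ∫ v in Set.Icc (-a) a, kap T v ≤ T * a := by
  calc _ ≤ ∫ v in Set.Icc (-a) a, T / 2 := by
        refine setIntegral_mono_on (kap_integrable hT).integrableOn (by simp) measurableSet_Icc ?_
        intro v _; exact kap_le_half hT v
    _ = _ := by
        simp [Real.volume_real_Icc_of_le (show -a ≤ a by linarith)]; ring

lemma kap_in_ge {T : ℝ} (hT : 0 < T) {a : ℝ} (ha : Real.pi / T ≤ a) :
    4 / Real.pi ≤ ∫ v in Set.Icc (-a) a, kap T v := by
  have hp : 0 < Real.pi / T := by positivity
  calc 4 / Real.pi = ∫ v in Set.Icc (-(Real.pi / T)) (Real.pi / T), 2 * T / Real.pi ^ 2 := by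
        simp [Real.volume_real_Icc_of_le (show -(Real.pi / T) ≤ Real.pi / T by linarith)]
        field_simp; ring
    _ ≤ ∫ v in Set.Icc (-(Real.pi / T)) (Real.pi / T), kap T v := by
        refine setIntegral_mono_on_ae (by simp) (kap_integrable hT).integrableOn measurableSet_Icc ?_
        filter_upwards [Measure.ae_ne volume (0 : ℝ)] with v hv hv'
        exact kap_ge hT hv (abs_le.2 hv')
    _ ≤ _ := by
        refine setIntegral_mono_set (kap_integrable hT).integrableOn
          (.of_forall fun v => kap_nonneg hT v) (LE.le.eventuallyLE ?_)
        exact Set.Icc_subset_Icc (by linarith) ha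

lemma kap_fourier {T : ℝ} (hT : 0 < T) {v : ℝ} (hv : v ≠ 0) :
    ∫ t in Set.Icc (-T) T, (((1 - |t| / T) / 2 : ℝ) : ℂ) * Complex.exp ((t * v : ℝ) * I)
      = (kap T v : ℂ) := by
  have hc : Continuous (fun t : ℝ => (((1 - |t| / T) / 2 : ℝ) : ℂ) * Complex.exp ((t * v : ℝ) * I)) := by
    fun_prop
  rw [integral_Icc_eq_integral_Ioc, ← intervalIntegral.integral_of_le (by linarith),
    ← intervalIntegral.integral_add_adjacent_intervals (b := 0) (hc.intervalIntegrable _ _)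
      (hc.intervalIntegrable _ _)]
  have h1 := intervalIntegral.integral_comp_neg (a := 0) (b := T)
    (f := fun t : ℝ => (((1 - |t| / T) / 2 : ℝ) : ℂ) * Complex.exp ((t * v : ℝ) * I))
  rw [neg_zero] at h1
  rw [← h1, ← intervalIntegral.integral_add ((show Continuous (fun t : ℝ => (((1 - |-t| / T) / 2 : ℝ) : ℂ) * Complex.exp ((-t * v : ℝ) * I))
      by fun_prop).intervalIntegrable _ _)
    (hc.intervalIntegrable _ _)]
  have h2 : ∀ t ∈ Set.uIcc 0 T, (((1 - |-t| / T) / 2 : ℝ) : ℂ) * Complex.exp ((-t * v : ℝ) * I)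
      + (((1 - |t| / T) / 2 : ℝ) : ℂ) * Complex.exp ((t * v : ℝ) * I)
      = (((1 - t / T) * Real.cos (t * v) : ℝ) : ℂ) := by
    intro t ht
    rw [Set.uIcc_of_le hT.le] at ht
    rw [abs_neg, abs_of_nonneg ht.1]
    push_cast
    rw [Complex.cos]
    ring_nf
  rw [intervalIntegral.integral_congr h2, intervalIntegral.integral_ofReal]
  congr 1
  rw [intervalIntegral.integral_eq_sub_of_hasDerivAt
    (f := fun t => (1 - t / T) * Real.sin (t * v) / v - Real.cos (t * v) / (T * v ^ 2))]
  · unfold kap; field_simp; simp; ring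
  · intro t _
    have e1 : HasDerivAt (fun t => t * v) v t := by simpa using (hasDerivAt_id t).mul_const v
    have e2 : HasDerivAt (fun t => 1 - t / T) (-(1 / T)) t := by
      simpa using ((hasDerivAt_id t).div_const T).const_sub 1
    refine (((e2.mul e1.sin).div_const v).sub (e1.cos.div_const (T * v ^ 2))).congr_deriv ?_
    field_simp
    ring
  · exact (by fun_prop : Continuous _).intervalIntegrable _ _

lemma iic_d_iic (p q : ℝ) : Set.Iic q \ Set.Iic p = Set.Ioc p q := by
  ext v; simp [and_comm]

lemma conv_diff {T : ℝ} (hT : 0 < T) (μ : Measure ℝ) [IsProbabilityMeasure μ] {x y : ℝ}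
    (hxy : y ≤ x) :
    ∫ v, kap T v * (μ.real (Set.Iic (x - v)) - μ.real (Set.Iic (y - v)))
      = ∫ u, (∫ s in Set.Ioc y x, kap T (s - u)) ∂μ := by
  have hm : MeasurableSet {p : ℝ × ℝ | p.1 + p.2 ∈ Set.Ioc y x} :=
    measurableSet_Ioc.preimage (measurable_fst.add measurable_snd)
  have h1 : ∀ v, kap T v * (μ.real (Set.Iic (x - v)) - μ.real (Set.Iic (y - v)))
      = ∫ u, kap T v * (Set.Ioc y x).indicator 1 (v + u) ∂μ := by
    intro v
    rw [integral_const_mul]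
    congr 1
    have : (fun u => (Set.Ioc y x).indicator (1 : ℝ → ℝ) (v + u))
        = (Set.Ioc (y - v) (x - v)).indicator 1 := by
      ext u
      simp only [Set.indicator, Set.mem_Ioc, Pi.one_apply]
      congr 1
      apply propext
      constructor <;> rintro ⟨h, h'⟩ <;> constructor <;> linarith
    rw [this, integral_indicator_one measurableSet_Ioc, ← iic_d_iic,
      measureReal_sdiff (Set.Iic_subset_Iic.2 (by linarith)) measurableSet_Iic]
  simp_rw [h1]
  rw [integral_integral_swap]
  · congr 1
    ext u
    rw [← integral_indicator measurableSet_Ioc,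
      ← integral_sub_right_eq_self (fun v => kap T v * (Set.Ioc y x).indicator 1 (v + u)) u]
    congr 1
    ext s
    by_cases h : s ∈ Set.Ioc y x <;> simp [h]
  · have hi : Integrable (fun p : ℝ × ℝ => kap T p.1) (volume.prod μ) :=
      (kap_integrable hT).comp_fst μ
    refine (hi.indicator hm).congr (.of_forall fun p => ?_)
    by_cases h : p.1 + p.2 ∈ Set.Ioc y x
    · simp only [Function.uncurry, Set.indicator, Set.mem_ofPred_eq, if_pos h, Pi.one_apply, mul_one]
    · simp only [Function.uncurry, Set.indicator, Set.mem_ofPred_eq, if_neg h, mul_zero]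

lemma integrable_of_bdd_meas {α : Type*} [MeasurableSpace α] {ν : Measure α} [IsFiniteMeasure ν]
    {f : α → ℂ} (hf : AEStronglyMeasurable f ν) (C : ℝ) (h : ∀ᵐ a ∂ν, ‖f a‖ ≤ C) : Integrable f ν :=
  (integrable_const C).mono' hf h

lemma wt_bound {T : ℝ} (hT : 0 < T) {t : ℝ} (ht : t ∈ Set.Icc (-T) T) :
    ‖(((1 - |t| / T) / 2 : ℝ) : ℂ)‖ ≤ 1 / 2 := by
  have h1 : |t| / T ≤ 1 := by
    rw [div_le_one hT]; exact abs_le.2 ht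
  have h2 : 0 ≤ |t| / T := by positivity
  rw [Complex.norm_real, Real.norm_eq_abs, abs_le]
  constructor <;> linarith

noncomputable def psi (x y t : ℝ) : ℂ := ∫ s in Set.Ioc y x, Complex.exp ((t * (-s) : ℝ) * I)

lemma psi_meas (x y : ℝ) : StronglyMeasurable (psi x y) := by
  have : Continuous (fun p : ℝ × ℝ => Complex.exp ((p.1 * (-p.2) : ℝ) * I)) := by fun_prop
  exact this.stronglyMeasurable.integral_prod_right' (ν := volume.restrict (Set.Ioc y x))

lemma psi_le {x y : ℝ} (hxy : y ≤ x) (t : ℝ) : ‖psi x y t‖ ≤ x - y := by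
  have := norm_setIntegral_le_of_norm_le_const (μ := volume) (s := Set.Ioc y x) (C := 1)
    (f := fun s => Complex.exp ((t * (-s) : ℝ) * I)) (by simp)
    (fun s _ => by rw [Complex.norm_exp_ofReal_mul_I])
  rw [Real.volume_real_Ioc_of_le hxy, one_mul] at this
  exact this

lemma psi_le_inv {x y : ℝ} (hxy : y ≤ x) {t : ℝ} (ht : t ≠ 0) : ‖psi x y t‖ ≤ 2 / |t| := by
  have h : psi x y t = (Complex.exp ((t * (-x) : ℝ) * I) - Complex.exp ((t * (-y) : ℝ) * I)) /
      (-(t * I)) := by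
    unfold psi
    have hc : (-((t : ℂ) * I)) ≠ 0 := by simp [ht]
    rw [← intervalIntegral.integral_of_le hxy]
    have := integral_exp_mul_complex (a := y) (b := x) hc
    convert this using 3 <;> push_cast <;> ring_nf
  rw [h, norm_div]
  have h2 : ‖(-((t : ℂ) * I))‖ = |t| := by simp
  rw [h2]
  gcongr
  refine (norm_sub_le _ _).trans ?_
  rw [Complex.norm_exp_ofReal_mul_I, Complex.norm_exp_ofReal_mul_I]; norm_num

lemma fourier_side {T : ℝ} (hT : 0 < T) (μ : Measure ℝ) [IsProbabilityMeasure μ] {x y : ℝ}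
    (hxy : y ≤ x) :
    IntegrableOn (fun t => (((1 - |t| / T) / 2 : ℝ) : ℂ) * psi x y t * charFn μ t) (Set.Icc (-T) T) ∧
    ((∫ u, (∫ s in Set.Ioc y x, kap T (s - u)) ∂μ : ℝ) : ℂ)
      = ∫ t in Set.Icc (-T) T, (((1 - |t| / T) / 2 : ℝ) : ℂ) * psi x y t * charFn μ t := by
  have hmemp : ∀ u : ℝ, ((∫ s in Set.Ioc y x, kap T (s - u) : ℝ) : ℂ)
      = ∫ t in Set.Icc (-T) T, (((1 - |t| / T) / 2 : ℝ) : ℂ) * psi x y t *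
        Complex.exp ((t * u : ℝ) * I) := by
    intro u
    rw [← integral_complex_ofReal]
    have e1 : ∫ s in Set.Ioc y x, (kap T (s - u) : ℂ) = ∫ s in Set.Ioc y x,
        ∫ t in Set.Icc (-T) T, (((1 - |t| / T) / 2 : ℝ) : ℂ) *
          Complex.exp ((t * (u - s) : ℝ) * I) := by
      refine integral_congr_ae (ae_restrict_of_ae ?_)
      filter_upwards [Measure.ae_ne volume u] with s hs
      rw [kap_fourier hT (sub_ne_zero.2 hs.symm), ← kap_neg, neg_sub]
    rw [e1, integral_integral_swap]
    · congr 1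
      ext t
      rw [integral_const_mul, mul_assoc]
      congr 1
      rw [psi, ← integral_mul_const]
      congr 1
      ext s
      rw [← Complex.exp_add]
      congr 1
      push_cast; ring
    · refine integrable_of_bdd_meas ?_ (1 / 2) ?_
      · exact (by fun_prop : Continuous (fun p : ℝ × ℝ => (((1 - |p.2| / T) / 2 : ℝ) : ℂ) *
          Complex.exp ((p.2 * (u - p.1) : ℝ) * I))).aestronglyMeasurable
      · have : ∀ᵐ p ∂((volume.restrict (Set.Ioc y x)).prod (volume.restrict (Set.Icc (-T) T))),
            p.2 ∈ Set.Icc (-T) T :=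
          Measure.quasiMeasurePreserving_snd.ae (ae_restrict_mem measurableSet_Icc)
        filter_upwards [this] with p hp
        simp only [Function.uncurry]
        rw [norm_mul, Complex.norm_exp_ofReal_mul_I, mul_one]
        exact wt_bound hT hp
  have hint : Integrable (Function.uncurry fun (u t : ℝ) => (((1 - |t| / T) / 2 : ℝ) : ℂ) *
      psi x y t * Complex.exp ((t * u : ℝ) * I)) (μ.prod (volume.restrict (Set.Icc (-T) T))) := by
    refine integrable_of_bdd_meas ?_ (1 / 2 * (x - y)) ?_
    · have hp : StronglyMeasurable (fun p : ℝ × ℝ => psi x y p.2) :=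
        (psi_meas x y).comp_measurable measurable_snd
      have c1 : Continuous (fun p : ℝ × ℝ => (((1 - |p.2| / T) / 2 : ℝ) : ℂ)) := by fun_prop
      have c2 : Continuous (fun p : ℝ × ℝ => Complex.exp ((p.2 * p.1 : ℝ) * I)) := by fun_prop
      exact ((c1.stronglyMeasurable.mul hp).mul c2.stronglyMeasurable).aestronglyMeasurable
    · have : ∀ᵐ p ∂(μ.prod (volume.restrict (Set.Icc (-T) T))), p.2 ∈ Set.Icc (-T) T :=
        Measure.quasiMeasurePreserving_snd.ae (ae_restrict_mem measurableSet_Icc)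
      filter_upwards [this] with p hp
      simp only [Function.uncurry]
      rw [norm_mul, norm_mul, Complex.norm_exp_ofReal_mul_I, mul_one]
      exact mul_le_mul (wt_bound hT hp) (psi_le hxy _) (norm_nonneg _) (by norm_num)
  have hch : ∀ t : ℝ, ∫ u, (((1 - |t| / T) / 2 : ℝ) : ℂ) * psi x y t *
      Complex.exp ((t * u : ℝ) * I) ∂μ = (((1 - |t| / T) / 2 : ℝ) : ℂ) * psi x y t * charFn μ t := by
    intro t
    rw [integral_const_mul]; rfl
  constructor
  · refine (hint.integral_prod_right).congr (.of_forall fun t => ?_)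
    exact hch t
  · rw [← integral_complex_ofReal]
    simp_rw [hmemp]
    rw [integral_integral_swap hint]
    simp_rw [hch]

lemma kap_mul_integrable {T : ℝ} (hT : 0 < T) (μ : Measure ℝ) [IsProbabilityMeasure μ] (x : ℝ) :
    Integrable (fun v => kap T v * μ.real (Set.Iic (x - v))) := by
  refine (kap_integrable hT).mono' ?_ (.of_forall fun v => ?_)
  · have hm : Monotone (fun z => μ.real (Set.Iic z)) :=
      fun a b h => measureReal_mono (Set.Iic_subset_Iic.2 h)
    exact ((kap_meas T).mul (hm.measurable.comp (measurable_const.sub measurable_id))).aestronglyMeasurable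
  · rw [norm_mul, Real.norm_of_nonneg (kap_nonneg hT v), Real.norm_of_nonneg measureReal_nonneg]
    exact mul_le_of_le_one_right (kap_nonneg hT v) measureReal_le_one

noncomputable def cv (T : ℝ) (μ : Measure ℝ) (x : ℝ) : ℝ := ∫ v, kap T v * μ.real (Set.Iic (x - v))

lemma cv_tendsto {T : ℝ} (hT : 0 < T) (μ : Measure ℝ) [IsProbabilityMeasure μ] :
    Tendsto (cv T μ) atBot (𝓝 0) := by
  have h0 : (0 : ℝ) = ∫ v, kap T v * 0 := by simp
  rw [h0]
  refine tendsto_integral_filter_of_dominated_convergence (kap T)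
    (.of_forall fun y => (kap_mul_integrable hT μ y).aestronglyMeasurable) ?_ (kap_integrable hT) ?_
  · refine .of_forall fun y => .of_forall fun v => ?_
    rw [norm_mul, Real.norm_of_nonneg (kap_nonneg hT v), Real.norm_of_nonneg measureReal_nonneg]
    exact mul_le_of_le_one_right (kap_nonneg hT v) measureReal_le_one
  · refine .of_forall fun v => Tendsto.const_mul _ ?_
    have h1 : Tendsto (fun z => μ.real (Set.Iic z)) atBot (𝓝 0) := by
      have := ProbabilityTheory.tendsto_cdf_atBot μ
      exact this.congr fun z => ProbabilityTheory.cdf_eq_real μ z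
    exact h1.comp (tendsto_atBot_add_const_right _ (-v) tendsto_id)

lemma cv_bound {T : ℝ} (hT : 0 < T) (μ ν : Measure ℝ) [IsProbabilityMeasure μ]
    [IsProbabilityMeasure ν] (x : ℝ) :
    ENNReal.ofReal |cv T μ x - cv T ν x| ≤
      ∫⁻ t in Set.Icc (-T) T, (‖(charFn μ t - charFn ν t) / (t : ℂ)‖₊ : ℝ≥0∞) := by
  have key : ∀ y ≤ x, ENNReal.ofReal |(cv T μ x - cv T μ y) - (cv T ν x - cv T ν y)| ≤
      ∫⁻ t in Set.Icc (-T) T, (‖(charFn μ t - charFn ν t) / (t : ℂ)‖₊ : ℝ≥0∞) := by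
    intro y hy
    have e : ∀ (ρ : Measure ℝ) [IsProbabilityMeasure ρ], ((cv T ρ x - cv T ρ y : ℝ) : ℂ) =
        ∫ t in Set.Icc (-T) T, (((1 - |t| / T) / 2 : ℝ) : ℂ) * psi x y t * charFn ρ t := by
      intro ρ _
      rw [← (fourier_side hT ρ hy).2, ← conv_diff hT ρ hy, cv, cv,
        ← integral_sub (kap_mul_integrable hT ρ x) (kap_mul_integrable hT ρ y)]
      simp_rw [mul_sub]
    have e2 : (((cv T μ x - cv T μ y) - (cv T ν x - cv T ν y) : ℝ) : ℂ) =
        ∫ t in Set.Icc (-T) T, (((1 - |t| / T) / 2 : ℝ) : ℂ) * psi x y t *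
          (charFn μ t - charFn ν t) := by
      rw [Complex.ofReal_sub, e, e, ← integral_sub (fourier_side hT μ hy).1 (fourier_side hT ν hy).1]
      simp_rw [mul_sub]
    have e3 : ENNReal.ofReal |(cv T μ x - cv T μ y) - (cv T ν x - cv T ν y)| =
        ‖(((cv T μ x - cv T μ y) - (cv T ν x - cv T ν y) : ℝ) : ℂ)‖ₑ := by
      rw [← ofReal_norm, Complex.norm_real, Real.norm_eq_abs]
    rw [e3, e2]
    refine (enorm_integral_le_lintegral_enorm _).trans ?_
    refine lintegral_mono_ae ?_
    filter_upwards [ae_restrict_mem measurableSet_Icc,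
      ae_restrict_of_ae (Measure.ae_ne volume (0 : ℝ))] with t ht ht0
    rw [← enorm_eq_nnnorm, ← ofReal_norm, ← ofReal_norm]
    apply ENNReal.ofReal_le_ofReal
    rw [norm_mul, norm_mul, norm_div, Complex.norm_real t, Real.norm_eq_abs t]
    have ht' : 0 < |t| := abs_pos.2 ht0
    calc _ ≤ 1 / 2 * (2 / |t|) * ‖charFn μ t - charFn ν t‖ := by
          gcongr
          · exact wt_bound hT ht
          · exact psi_le_inv hy ht0
      _ = _ := by field_simp
  have hl : Tendsto (fun y => ENNReal.ofReal |(cv T μ x - cv T μ y) - (cv T ν x - cv T ν y)|) atBot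
      (𝓝 (ENNReal.ofReal |(cv T μ x - 0) - (cv T ν x - 0)|)) := by
    refine ENNReal.tendsto_ofReal (Tendsto.abs ?_)
    exact ((cv_tendsto hT μ).const_sub _).sub ((cv_tendsto hT ν).const_sub _)
  rw [sub_zero, sub_zero] at hl
  refine le_of_tendsto hl ?_
  filter_upwards [eventually_le_atBot x] with y hy using key y hy

lemma kol_bdd (μ ν : Measure ℝ) [IsProbabilityMeasure μ] [IsProbabilityMeasure ν] :
    BddAbove (Set.range fun t : ℝ => |(μ (Set.Iic t)).toReal - (ν (Set.Iic t)).toReal|) := by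
  refine ⟨1, ?_⟩
  rintro _ ⟨t, rfl⟩
  have h1 : (μ (Set.Iic t)).toReal ≤ 1 := measureReal_le_one
  have h2 : (ν (Set.Iic t)).toReal ≤ 1 := measureReal_le_one
  have h3 : 0 ≤ (μ (Set.Iic t)).toReal := ENNReal.toReal_nonneg
  have h4 : 0 ≤ (ν (Set.Iic t)).toReal := ENNReal.toReal_nonneg
  simp only [abs_le]
  constructor <;> linarith

lemma le_kol (μ ν : Measure ℝ) [IsProbabilityMeasure μ] [IsProbabilityMeasure ν] (t : ℝ) :
    |μ.real (Set.Iic t) - ν.real (Set.Iic t)| ≤ kolDist μ ν :=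
  le_ciSup (kol_bdd μ ν) t

lemma kol_nonneg (μ ν : Measure ℝ) : 0 ≤ kolDist μ ν :=
  Real.iSup_nonneg fun _ => abs_nonneg _

lemma dens_lip {fZ : ℝ → ℝ} {B : ℝ} (h0 : ∀ x, 0 ≤ fZ x) (hB : ∀ x, fZ x ≤ B) {μ : Measure ℝ}
    [IsProbabilityMeasure μ] (hμ : μ = volume.withDensity (fun x => ENNReal.ofReal (fZ x)))
    {p q : ℝ} (hpq : p ≤ q) : μ.real (Set.Iic q) - μ.real (Set.Iic p) ≤ B * (q - p) := by
  have hB0 : 0 ≤ B := (h0 0).trans (hB 0)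
  rw [← measureReal_sdiff (Set.Iic_subset_Iic.2 hpq) measurableSet_Iic, iic_d_iic]
  refine ENNReal.toReal_le_of_le_ofReal (mul_nonneg hB0 (by linarith)) ?_
  rw [hμ, withDensity_apply _ measurableSet_Ioc]
  calc _ ≤ ∫⁻ x in Set.Ioc p q, ENNReal.ofReal B :=
        lintegral_mono fun x => ENNReal.ofReal_le_ofReal (hB x)
    _ = _ := by
        rw [lintegral_const, Measure.restrict_apply_univ, Real.volume_Ioc, ENNReal.ofReal_mul hB0]

/-- averaging step -/
lemma avg_step {T : ℝ} (hT : 0 < T) {a η L : ℝ} {D : ℝ → ℝ}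
    (hi : Integrable (fun v => kap T v * D v))
    (hη : ∀ v, -η ≤ D v) (hL : ∀ v ∈ Set.Icc (-a) a, L ≤ D v) :
    L * (∫ v in Set.Icc (-a) a, kap T v) - η * (∫ v in (Set.Icc (-a) a)ᶜ, kap T v)
      ≤ ∫ v, kap T v * D v := by
  rw [← integral_add_compl measurableSet_Icc hi, sub_eq_add_neg, ← neg_mul]
  rw [← integral_const_mul, ← integral_const_mul]
  refine add_le_add ?_ ?_
  · refine setIntegral_mono_on ((kap_integrable hT).const_mul _).integrableOn hi.integrableOn
      measurableSet_Icc fun v hv => ?_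
    rw [mul_comm]
    exact mul_le_mul_of_nonneg_left (hL v hv) (kap_nonneg hT v)
  · refine setIntegral_mono_on ((kap_integrable hT).const_mul _).integrableOn hi.integrableOn
      measurableSet_Icc.compl fun v hv => ?_
    rw [mul_comm]
    exact mul_le_mul_of_nonneg_left (hη v) (kap_nonneg hT v)

theorem esseen_type_inequality :
    ∃ c : ℝ, 0 < c ∧
      ∀ (μX μY μZ : Measure ℝ), IsProbabilityMeasure μX → IsProbabilityMeasure μY →
      ∀ (fZ : ℝ → ℝ) (B : ℝ), Measurable fZ → (∀ x, 0 ≤ fZ x) → (∀ x, fZ x ≤ B) →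
      μZ = MeasureTheory.volume.withDensity (fun x => ENNReal.ofReal (fZ x)) →
      IsProbabilityMeasure μZ →
      ∀ T : ℝ, 0 < T →
        ENNReal.ofReal (kolDist μX μY) ≤
          ENNReal.ofReal (4 * c * kolDist μY μZ) +
            (∫⁻ t in Set.Icc (-T) T, (‖(charFn μX t - charFn μY t) / (t : ℂ)‖₊ : ℝ≥0∞)) +
            ENNReal.ofReal (2 * B * c ^ 2 / T) := by
  refine ⟨40, by norm_num, ?_⟩
  intro μX μY μZ hX hY fZ B _ h0 hB hμ hZ T hT
  have hB0 : 0 ≤ B := (h0 0).trans (hB 0)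
  set J := ∫⁻ t in Set.Icc (-T) T, (‖(charFn μX t - charFn μY t) / (t : ℂ)‖₊ : ℝ≥0∞) with hJ
  by_cases hJt : J = ⊤
  · rw [hJt]; simp
  have hcv : ∀ x, |cv T μX x - cv T μY x| ≤ J.toReal := fun x =>
    (ENNReal.ofReal_le_iff_le_toReal hJt).1 (cv_bound hT μX μY x)
  set η := kolDist μX μY with hη
  set δ := kolDist μY μZ with hδ
  have hη0 : 0 ≤ η := kol_nonneg _ _
  have hδ0 : 0 ≤ δ := kol_nonneg _ _
  have hJ0 : 0 ≤ J.toReal := ENNReal.toReal_nonneg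
  have hG : ∀ p q : ℝ, p ≤ q → μY.real (Set.Iic q) - μY.real (Set.Iic p) ≤ 2 * δ + B * (q - p) := by
    intro p q hpq
    have h1 := abs_le.1 (le_kol μY μZ p)
    have h2 := abs_le.1 (le_kol μY μZ q)
    have h3 := dens_lip h0 hB hμ hpq
    linarith [h1.1, h2.2]
  set a := 40 / T with ha
  have ha0 : 0 < a := by positivity
  set mi := ∫ v in Set.Icc (-a) a, kap T v with hmi
  set mo := ∫ v in (Set.Icc (-a) a)ᶜ, kap T v with hmo
  have hTa : T * a = 40 := by rw [ha]; field_simp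
  have h_mi1 : mi ≤ 40 := (kap_in_le hT ha0).trans hTa.le
  have h_mo : mo ≤ 1 / 10 := (kap_out hT ha0).trans (by rw [hTa]; norm_num)
  have h_mi2 : 4 / Real.pi ≤ mi := by
    refine kap_in_ge hT ?_
    rw [ha]; gcongr; linarith [Real.pi_lt_four]
  have hpi : (1.1 : ℝ) ≤ 4 / Real.pi := by
    rw [le_div_iff₀ Real.pi_pos]; linarith [Real.pi_lt_d2]
  have hcvd : ∀ x, Integrable (fun v => kap T v *
        (μX.real (Set.Iic (x - v)) - μY.real (Set.Iic (x - v)))) ∧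
      cv T μX x - cv T μY x = ∫ v, kap T v *
        (μX.real (Set.Iic (x - v)) - μY.real (Set.Iic (x - v))) := by
    intro x
    have i1 := kap_mul_integrable hT μX x
    have i2 := kap_mul_integrable hT μY x
    simp_rw [mul_sub]
    exact ⟨i1.sub i2, by rw [integral_sub i1 i2]; rfl⟩
  set E := 2 * δ + B * (2 * a) with hE
  have hE0 : 0 ≤ E := by positivity
  have hmain : ∀ x0, |μX.real (Set.Iic x0) - μY.real (Set.Iic x0)| * mi ≤
      J.toReal + η * mo + E * mi := by
    intro x0
    rcases abs_cases (μX.real (Set.Iic x0) - μY.real (Set.Iic x0)) with ⟨h, _⟩ | ⟨h, _⟩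
    · rw [h]
      obtain ⟨i1, i2⟩ := hcvd (x0 + a)
      have := avg_step hT (a := a) (η := η)
        (L := (μX.real (Set.Iic x0) - μY.real (Set.Iic x0)) - E) i1
        (fun v => (abs_le.1 (le_kol μX μY _)).1) (fun v hv => by
          have g1 : x0 ≤ x0 + a - v := by linarith [hv.2]
          have g2 := hG _ _ g1
          have g3 : μX.real (Set.Iic x0) ≤ μX.real (Set.Iic (x0 + a - v)) :=
            measureReal_mono (Set.Iic_subset_Iic.2 g1)
          have g4 : B * (x0 + a - v - x0) ≤ B * (2 * a) := by
            gcongr; linarith [hv.1]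
          linarith)
      rw [← i2] at this
      have h5 := (abs_le.1 (hcv (x0 + a))).2
      linarith
    · rw [h]
      obtain ⟨i1, i2⟩ := hcvd (x0 - a)
      have := avg_step hT (a := a) (η := η)
        (L := -(μX.real (Set.Iic x0) - μY.real (Set.Iic x0)) - E)
        (D := fun v => -(μX.real (Set.Iic (x0 - a - v)) - μY.real (Set.Iic (x0 - a - v))))
        (by simp_rw [mul_neg]; exact i1.neg)
        (fun v => by linarith [(abs_le.1 (le_kol μX μY (x0 - a - v))).2]) (fun v hv => by
          have g1 : x0 - a - v ≤ x0 := by linarith [hv.1]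
          have g2 := hG _ _ g1
          have g3 : μX.real (Set.Iic (x0 - a - v)) ≤ μX.real (Set.Iic x0) :=
            measureReal_mono (Set.Iic_subset_Iic.2 g1)
          have g4 : B * (x0 - (x0 - a - v)) ≤ B * (2 * a) := by
            gcongr; linarith [hv.2]
          linarith)
      simp_rw [mul_neg] at this
      rw [integral_neg, ← i2] at this
      have h5 := (abs_le.1 (hcv (x0 - a))).1
      linarith
  have hmi0 : 0 < mi := by linarith
  have hsup : η ≤ (J.toReal + η * mo + E * mi) / mi := by
    refine ciSup_le fun x0 => ?_
    rw [le_div_iff₀ hmi0]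
    exact hmain x0
  rw [le_div_iff₀ hmi0] at hsup
  have hfin : η ≤ 4 * 40 * δ + J.toReal + 2 * B * 40 ^ 2 / T := by
    have k1 : η * 1 ≤ η * (mi - mo) := by gcongr; linarith
    have k2 : E * mi ≤ E * 40 := by gcongr
    have k3 : E * 40 = 80 * δ + 2 * B * 40 ^ 2 / T := by
      rw [hE, ha]; ring
    linarith
  calc ENNReal.ofReal η ≤ ENNReal.ofReal (4 * 40 * δ + J.toReal + 2 * B * 40 ^ 2 / T) :=
        ENNReal.ofReal_le_ofReal hfin
    _ = _ := by
        rw [ENNReal.ofReal_add (by positivity) (by positivity),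
          ENNReal.ofReal_add (by positivity) (by positivity), ENNReal.ofReal_toReal hJt]
end

section
/- Let Y be a real-valued random variable and Z a real-valued random variable whose law has a bounded Lebesgue density f_Z. Then for every x ∈ ℝ and every a > 0, ∫_{−a}^{a} | P(Y ≤ x + y) − P(Y ≤ x) | dy ≤ ‖f_Z‖_∞ · a² + 4a · d_K(Y,Z), where d_K(Y,Z) = sup_{t∈ℝ} |P(Y ≤ t) − P(Z ≤ t)| and ‖f_Z‖_∞ = sup f_Z. -/
open MeasureTheory Filter Topology
open scoped ENNReal

lemma aux_kol_le (μ ν : Measure ℝ) [IsProbabilityMeasure μ] [IsProbabilityMeasure ν] (t : ℝ) :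
    |(μ (Set.Iic t)).toReal - (ν (Set.Iic t)).toReal| ≤ kolDist μ ν := by
  unfold kolDist
  refine le_ciSup (f := fun t : ℝ => |(μ (Set.Iic t)).toReal - (ν (Set.Iic t)).toReal|) ?_ t
  refine ⟨1, ?_⟩
  rintro _ ⟨s, rfl⟩
  have h1 : (μ (Set.Iic s)).toReal ≤ 1 := measureReal_le_one
  have h2 : (ν (Set.Iic s)).toReal ≤ 1 := measureReal_le_one
  have h3 : 0 ≤ (μ (Set.Iic s)).toReal := ENNReal.toReal_nonneg
  have h4 : 0 ≤ (ν (Set.Iic s)).toReal := ENNReal.toReal_nonneg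
  simp only
  rw [abs_le]
  constructor <;> linarith

lemma aux_mono (μ : Measure ℝ) [IsProbabilityMeasure μ] :
    Monotone (fun t : ℝ => (μ (Set.Iic t)).toReal) := fun _ _ h =>
  ENNReal.toReal_mono (measure_ne_top _ _) (measure_mono (Set.Iic_subset_Iic.2 h))

lemma aux_lip (μZ : Measure ℝ) (fZ : ℝ → ℝ) (B : ℝ) (hfZ0 : ∀ x, 0 ≤ fZ x)
    (hfZB : ∀ x, fZ x ≤ B)
    (hμZ : μZ = MeasureTheory.volume.withDensity (fun x => ENNReal.ofReal (fZ x)))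
    [IsProbabilityMeasure μZ] (s t : ℝ) (hst : s ≤ t) :
    (μZ (Set.Iic t)).toReal - (μZ (Set.Iic s)).toReal ≤ B * (t - s) := by
  have hB : 0 ≤ B := (hfZ0 0).trans (hfZB 0)
  have h1 : μZ (Set.Ioc s t) ≤ ENNReal.ofReal (B * (t - s)) := by
    rw [hμZ, withDensity_apply _ measurableSet_Ioc, ENNReal.ofReal_mul hB]
    calc _ ≤ ∫⁻ _ in Set.Ioc s t, ENNReal.ofReal B :=
          lintegral_mono fun y => ENNReal.ofReal_le_ofReal (hfZB y)
      _ = _ := by simp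
  have h2 : μZ (Set.Iic t) ≤ μZ (Set.Iic s) + μZ (Set.Ioc s t) := by
    rw [← Set.Iic_union_Ioc_eq_Iic hst]
    exact measure_union_le _ _
  have h3 := ENNReal.toReal_mono (by finiteness) h2
  rw [ENNReal.toReal_add (by finiteness) (by finiteness)] at h3
  have h4 := ENNReal.toReal_mono (by finiteness) h1
  rw [ENNReal.toReal_ofReal (mul_nonneg hB (sub_nonneg.2 hst))] at h4
  linarith

lemma aux_int_abs (a : ℝ) (ha : 0 < a) : ∫ y in (-a)..a, |y| = a ^ 2 := by
  have hi : ∀ b c : ℝ, IntervalIntegrable (fun y : ℝ => |y|) volume b c :=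
    fun b c => continuous_abs.intervalIntegrable b c
  rw [← intervalIntegral.integral_add_adjacent_intervals (hi (-a) 0) (hi 0 a)]
  have h1 : ∫ y in (-a)..0, |y| = ∫ y in (-a)..0, -y := by
    refine intervalIntegral.integral_congr fun y hy => ?_
    rw [Set.uIcc_of_le (by linarith)] at hy
    exact abs_of_nonpos hy.2
  have h2 : ∫ y in (0:ℝ)..a, |y| = ∫ y in (0:ℝ)..a, y := by
    refine intervalIntegral.integral_congr fun y hy => ?_
    rw [Set.uIcc_of_le ha.le] at hy
    exact abs_of_nonneg hy.1
  rw [h1, h2, intervalIntegral.integral_neg, integral_id, integral_id]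
  ring

/-- Intermediate smoothing step in the proof of Lemma 2.6: if `Z` has a bounded Lebesgue
density `f_Z`, then for every `x ∈ ℝ` and `a > 0`,
`∫_{−a}^{a} |P(Y ≤ x+y) − P(Y ≤ x)| dy ≤ ‖f_Z‖_∞ a² + 4a d_K(Y,Z)`. -/
theorem cdf_local_fluctuation
    (μY μZ : Measure ℝ) [IsProbabilityMeasure μY]
    (fZ : ℝ → ℝ) (B : ℝ) (hfZmeas : Measurable fZ) (hfZ0 : ∀ x, 0 ≤ fZ x)
    (hfZB : ∀ x, fZ x ≤ B)
    (hμZ : μZ = MeasureTheory.volume.withDensity (fun x => ENNReal.ofReal (fZ x)))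
    [IsProbabilityMeasure μZ]
    (x a : ℝ) (ha : 0 < a) :
    (∫ y in (-a)..a, |(μY (Set.Iic (x + y))).toReal - (μY (Set.Iic x)).toReal|) ≤
      B * a ^ 2 + 4 * a * kolDist μY μZ := by
  have hmono := aux_mono μY
  have hF : IntervalIntegrable (fun y : ℝ =>
      |(μY (Set.Iic (x + y))).toReal - (μY (Set.Iic x)).toReal|) volume (-a) a := by
    have : Monotone (fun y : ℝ => (μY (Set.Iic (x + y))).toReal) := fun u v h =>
      hmono (by linarith)
    exact (this.intervalIntegrable.sub intervalIntegrable_const).abs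
  have hi : IntervalIntegrable (fun y : ℝ => B * |y|) volume (-a) a :=
    (continuous_const.mul continuous_abs).intervalIntegrable _ _
  have hG : IntervalIntegrable (fun y : ℝ => B * |y| + 2 * kolDist μY μZ) volume (-a) a :=
    hi.add intervalIntegrable_const
  calc _ ≤ ∫ y in (-a)..a, (B * |y| + 2 * kolDist μY μZ) := by
        refine intervalIntegral.integral_mono_on (by linarith) hF hG fun y _ => ?_
        have k1 := abs_le.1 (aux_kol_le μY μZ (x + y))
        have k2 := abs_le.1 (aux_kol_le μY μZ x)
        rcases le_total 0 y with hy | hy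
        · have l := aux_lip μZ fZ B hfZ0 hfZB hμZ x (x + y) (by linarith)
          have m : (μY (Set.Iic x)).toReal ≤ (μY (Set.Iic (x + y))).toReal :=
            hmono (by linarith)
          rw [abs_of_nonneg (sub_nonneg.2 m), abs_of_nonneg hy]
          ring_nf at l k1 k2 ⊢
          linarith [k1.1, k1.2, k2.1, k2.2]
        · have l := aux_lip μZ fZ B hfZ0 hfZB hμZ (x + y) x (by linarith)
          have m : (μY (Set.Iic (x + y))).toReal ≤ (μY (Set.Iic x)).toReal :=
            hmono (by linarith)
          rw [abs_of_nonpos (sub_nonpos.2 m), abs_of_nonpos hy]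
          ring_nf at l k1 k2 ⊢
          linarith [k1.1, k1.2, k2.1, k2.2]
    _ = _ := by
        rw [intervalIntegral.integral_add hi intervalIntegrable_const,
          intervalIntegral.integral_const_mul, aux_int_abs a ha,
          intervalIntegral.integral_const, smul_eq_mul]
        ring
end

section
/- Let (E, 𝓕, μ) be a probability space, (𝒳_i)_{i≥0} measurable spaces, X_i : E → 𝒳_i measurable, 𝒴_n = ∏_{j≥n} 𝒳_j and X̄_n(x) = (X_n(x), X_{n+1}(x), ...). Let (δ_n) be nonnegative reals with δ_n → 0, and let r : E → [0,∞) with ∫ r dμ = 1 satisfy the decorrelation property with constant K ≥ 0 relative to (δ_n). Let g_j : 𝒴_j → ℝ^d be measurable, S_n = Σ_{j=0}^{n-1} g_j∘X̄_j, with ∫|S_n| dμ < ∞ and ∫ r·|S_n| dμ < ∞ for all n, and let (b_n) be positive reals with b_n → ∞. Then for every m ≥ 1, every 0 < s₁ ≤ s₂ ≤ ... ≤ s_m, and every t = (t₁, ..., t_m) ∈ (ℝ^d)^m, lim_{n→∞} | ∫ r(x) exp( i Σ_{k=1}^m ⟨t_k, S_{[n s_k]}(x)⟩ / b_n ) dμ(x)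 − ∫ exp( i Σ_{k=1}^m ⟨t_k, S_{[n s_k]}(x)⟩ / b_n ) dμ(x) | = 0. In particular, the finite-dimensional distributions of the process t ↦ S_{[nt]}/b_n at times s₁, ..., s_m converge weakly under μ if and only if they converge weakly under ν = r dμ, with the same limit. -/
open MeasureTheory Filter Topology Complex
open scoped BigOperators ENNReal RealInnerProductSpace

lemma meas_Xbar_comap {E : Type*} {𝒳 : ℕ → Type*} [∀ i, MeasurableSpace (𝒳 i)]
    (X : ∀ i, E → 𝒳 i) (N j : ℕ) (h : N ≤ j) :
    Measurable[MeasurableSpace.comap (Xbar X N) inferInstance] (Xbar X j) := by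
  have key : ∀ k, N ≤ k →
      Measurable[MeasurableSpace.comap (Xbar X N) inferInstance] (X k) := by
    intro k hk
    obtain ⟨i, rfl⟩ := Nat.exists_eq_add_of_le hk
    have h1 := comap_measurable (m := (inferInstance : MeasurableSpace (∀ j, 𝒳 (N + j)))) (Xbar X N)
    exact (measurable_pi_apply i).comp h1
  refine @measurable_pi_lambda _ _ _ (_) _ _ fun i => ?_
  exact key _ (by omega)

lemma key_lemma
    {E : Type*} [MeasurableSpace E] (μ : Measure E) [IsProbabilityMeasure μ]
    {𝒳 : ℕ → Type*} [∀ i, MeasurableSpace (𝒳 i)]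
    (X : ∀ i, E → 𝒳 i)
    (δ : ℕ → ℝ) (hδ : Tendsto δ atTop (𝓝 0))
    (r : E → ℝ) (hr0 : ∀ x, 0 ≤ r x) (hr1 : ∫ x, r x ∂μ = 1)
    (K : ℝ) (hdec : Decorrelates μ X r K δ)
    {d : ℕ} (g : ∀ j, (∀ i, 𝒳 (j + i)) → EuclideanSpace ℝ (Fin d))
    (hg : ∀ j, Measurable (g j))
    (S : ℕ → E → EuclideanSpace ℝ (Fin d))
    (hS : ∀ n x, S n x = ∑ j ∈ Finset.range n, g j (Xbar X j x))
    (hSm : ∀ n, Measurable (S n))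
    (hSint : ∀ n, Integrable (S n) μ)
    (hSrint : ∀ n, Integrable (fun x => r x * ‖S n x‖) μ)
    (b : ℕ → ℝ) (hb0 : ∀ n, 0 < b n) (hb : Tendsto b atTop atTop)
    (m : ℕ) (s : Fin m → ℝ) (hspos : ∀ k, 0 < s k)
    (h : (Fin m → EuclideanSpace ℝ (Fin d)) → ℂ) (C L : ℝ) (hC : ∀ w, ‖h w‖ ≤ C) (hL0 : 0 ≤ L)
    (hL : ∀ w w', ‖h w - h w'‖ ≤ L * ‖w - w'‖) :
    Tendsto (fun n : ℕ =>
        ‖(∫ x, (r x : ℂ) * h (fun k => (b n)⁻¹ • S (⌊(n : ℝ) * s k⌋₊) x) ∂μ) -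
            ∫ x, h (fun k => (b n)⁻¹ • S (⌊(n : ℝ) * s k⌋₊) x) ∂μ‖)
        atTop (𝓝 0) := by
  have hri : Integrable r μ := by
    by_contra hh
    rw [integral_undef hh] at hr1
    norm_num at hr1
  have hhc : Continuous h := by
    have : LipschitzWith ⟨L, hL0⟩ h := LipschitzWith.of_dist_le_mul fun x y => by
      rw [dist_eq_norm, dist_eq_norm]; exact hL x y
    exact this.continuous
  have hric : Integrable (fun x => (r x : ℂ)) μ := hri.ofReal
  rw [Metric.tendsto_atTop']
  intro ε hε
  obtain ⟨N, hN⟩ : ∃ N, K * C * δ N < ε / 2 := by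
    have h1 : Tendsto (fun n => K * C * δ n) atTop (𝓝 0) := by
      simpa using hδ.const_mul (K * C)
    exact (h1.eventually (gt_mem_nhds (by positivity : (0:ℝ) < ε / 2))).exists
  set A : ℝ := ∫ x, r x * ‖S N x‖ ∂μ
  set B : ℝ := ∫ x, ‖S N x‖ ∂μ
  have ev1 : ∀ᶠ n in atTop, (b n)⁻¹ * (L * (A + B)) < ε / 2 := by
    have h1 : Tendsto (fun n => (b n)⁻¹ * (L * (A + B))) atTop (𝓝 0) := by
      simpa using (tendsto_inv_atTop_zero.comp hb).mul_const (L * (A + B))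
    exact h1.eventually (gt_mem_nhds (by positivity : (0:ℝ) < ε / 2))
  have ev2 : ∀ᶠ n : ℕ in atTop, ∀ k, N ≤ ⌊(n : ℝ) * s k⌋₊ := by
    rw [eventually_all]
    intro k
    have : Tendsto (fun n : ℕ => ⌊(n : ℝ) * s k⌋₊) atTop atTop :=
      tendsto_nat_floor_atTop.comp (tendsto_natCast_atTop_atTop.atTop_mul_const (hspos k))
    exact this.eventually_ge_atTop N
  obtain ⟨n0, hn0⟩ := eventually_atTop.1 (ev1.and ev2)
  refine ⟨n0, fun n hn => ?_⟩
  obtain ⟨e1, e2⟩ := hn0 n hn.le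
  rw [dist_zero_right, norm_norm]
  set W : E → Fin m → EuclideanSpace ℝ (Fin d) := fun x k => (b n)⁻¹ • S (⌊(n : ℝ) * s k⌋₊) x with hW
  set V : E → Fin m → EuclideanSpace ℝ (Fin d) :=
    fun x k => (b n)⁻¹ • (S (⌊(n : ℝ) * s k⌋₊) x - S N x) with hV
  have hbn := hb0 n
  have hWm : Measurable W := measurable_pi_lambda _ fun k => Measurable.fun_const_smul (hSm _) _
  have hVm0 : Measurable V := measurable_pi_lambda _ fun k => Measurable.fun_const_smul ((hSm _).sub (hSm N)) _
  have hVm : Measurable[MeasurableSpace.comap (Xbar X N) inferInstance] V := by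
    refine @measurable_pi_lambda _ _ _ (_) _ _ fun k => ?_
    have : (fun x => V x k) = fun x =>
        (b n)⁻¹ • ∑ j ∈ Finset.Ico N (⌊(n : ℝ) * s k⌋₊), g j (Xbar X j x) := by
      funext x
      simp only [hV, hS]
      rw [Finset.sum_Ico_eq_sub _ (e2 k)]
    rw [this]
    refine Measurable.fun_const_smul ?_ _
    refine Finset.measurable_fun_sum _ fun j hj => ?_
    exact (hg j).comp (meas_Xbar_comap X N j (Finset.mem_Ico.1 hj).1)
  obtain ⟨F, hF, hVF⟩ := hVm.exists_eq_measurable_comp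
  have hdiff : ∀ x, ‖h (W x) - h (V x)‖ ≤ L * (b n)⁻¹ * ‖S N x‖ := by
    intro x
    refine (hL _ _).trans ?_
    rw [mul_assoc]
    refine mul_le_mul_of_nonneg_left ?_ hL0
    refine (pi_norm_le_iff_of_nonneg (by positivity)).2 fun k => ?_
    have : (W x - V x) k = (b n)⁻¹ • S N x := by
      simp only [hW, hV, Pi.sub_apply, smul_sub, sub_sub_cancel]
    rw [this, norm_smul, Real.norm_of_nonneg (by positivity)]
  have iW : Integrable (fun x => h (W x)) μ :=
    Integrable.of_bound (hhc.measurable.comp hWm).aestronglyMeasurable C (ae_of_all _ fun x => hC _)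
  have iV : Integrable (fun x => h (V x)) μ :=
    Integrable.of_bound (hhc.measurable.comp hVm0).aestronglyMeasurable C (ae_of_all _ fun x => hC _)
  have irW : Integrable (fun x => (r x : ℂ) * h (W x)) μ :=
    hric.mul_bdd (c := C) (hhc.measurable.comp hWm).aestronglyMeasurable (ae_of_all _ fun x => hC _)
  have irV : Integrable (fun x => (r x : ℂ) * h (V x)) μ :=
    hric.mul_bdd (c := C) (hhc.measurable.comp hVm0).aestronglyMeasurable (ae_of_all _ fun x => hC _)
  have d1 : ‖(∫ x, (r x : ℂ) * h (W x) ∂μ) - ∫ x, (r x : ℂ) * h (V x) ∂μ‖ ≤ L * (b n)⁻¹ * A := by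
    rw [← integral_sub irW irV, ← integral_const_mul]
    refine norm_integral_le_of_norm_le ((hSrint N).const_mul _) (ae_of_all _ fun x => ?_)
    rw [← mul_sub, norm_mul, Complex.norm_real, Real.norm_of_nonneg (hr0 x)]
    calc _ ≤ r x * (L * (b n)⁻¹ * ‖S N x‖) := mul_le_mul_of_nonneg_left (hdiff x) (hr0 x)
      _ = _ := by ring
  have d2 : ‖(∫ x, h (W x) ∂μ) - ∫ x, h (V x) ∂μ‖ ≤ L * (b n)⁻¹ * B := by
    rw [← integral_sub iW iV, ← integral_const_mul]
    exact norm_integral_le_of_norm_le ((hSint N).norm.const_mul _) (ae_of_all _ hdiff)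
  have d3 : ‖(∫ x, (r x : ℂ) * h (V x) ∂μ) - ∫ x, h (V x) ∂μ‖ ≤ K * C * δ N := by
    have := hdec N (fun y => h (F y)) C (hhc.measurable.comp hF) (fun y => hC _)
    rw [hr1] at this
    rw [hVF]
    simpa using this
  have tri : ∀ a a' c c' : ℂ, ‖a - c‖ ≤ ‖a - a'‖ + ‖c - c'‖ + ‖a' - c'‖ := by
    intro a a' c c'
    have : a - c = (a - a') - (c - c') + (a' - c') := by ring
    rw [this]
    exact (norm_add_le _ _).trans (by gcongr; exact norm_sub_le _ _)
  have t := tri (∫ x, (r x : ℂ) * h (W x) ∂μ) (∫ x, (r x : ℂ) * h (V x) ∂μ)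
    (∫ x, h (W x) ∂μ) (∫ x, h (V x) ∂μ)
  have : L * (b n)⁻¹ * A + L * (b n)⁻¹ * B = (b n)⁻¹ * (L * (A + B)) := by ring
  linarith

lemma tid_iff {E G : Type*} [MeasurableSpace E] [PseudoEMetricSpace G]
    [MeasurableSpace G] [BorelSpace G]
    (μ : Measure E) [IsProbabilityMeasure μ] (W : ℕ → E → G) (hW : ∀ n, Measurable (W n))
    (P : Measure G) [IsProbabilityMeasure P] :
    TendstoInDistribution μ W P ↔
      ∀ f : G → ℝ, (∃ (C : ℝ), ∀ x y, dist (f x) (f y) ≤ C) → (∃ L, LipschitzWith L f) →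
        Tendsto (fun n => ∫ x, f (W n x) ∂μ) atTop (𝓝 (∫ y, f y ∂P)) := by
  let μs : ℕ → ProbabilityMeasure G := fun n =>
    ⟨μ.map (W n), Measure.isProbabilityMeasure_map (hW n).aemeasurable⟩
  have e : ∀ (f : G → ℝ) n, Continuous f → ∫ y, f y ∂(μs n : Measure G) = ∫ x, f (W n x) ∂μ := by
    intro f n hf
    exact integral_map (hW n).aemeasurable hf.measurable.aestronglyMeasurable
  have h1 := ProbabilityMeasure.tendsto_iff_forall_integral_tendsto (F := atTop) (μs := μs)
    (μ := ⟨P, inferInstance⟩)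
  have h2 := tendsto_iff_forall_lipschitz_integral_tendsto (F := atTop) (μs := μs)
    (μ := ⟨P, inferInstance⟩)
  have h3 : TendstoInDistribution μ W P ↔ Tendsto μs atTop (𝓝 ⟨P, inferInstance⟩) := by
    rw [h1]
    refine forall_congr' fun f => ?_
    simp_rw [e f _ f.continuous]
    rfl
  rw [h3, h2]
  refine forall_congr' fun f => forall_congr' fun _ => forall_congr' fun hL => ?_
  obtain ⟨L, hL⟩ := hL
  simp_rw [e f _ hL.continuous]
  rfl

/-- Finite-dimensional-distribution step in the proof of Theorem 2.8 (the weak invariance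
principle version of Eagleson's theorem): for any `0 < s₁ ≤ ... ≤ s_m` and
`t = (t₁,...,t_m) ∈ (ℝ^d)^m`, the difference of the joint characteristic functions of
`(S_{[ns₁]},...,S_{[ns_m]})/bₙ` under `ν = r dμ` and under `μ` tends to `0`; in particular
the finite-dimensional distributions converge weakly under `μ` iff they do under `ν`, with
the same limit. -/
theorem eagleson_fdd
    {E : Type*} [MeasurableSpace E] (μ : Measure E) [IsProbabilityMeasure μ]
    {𝒳 : ℕ → Type*} [∀ i, MeasurableSpace (𝒳 i)]
    (X : ∀ i, E → 𝒳 i) (hX : ∀ i, Measurable (X i))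
    (δ : ℕ → ℝ) (hδ0 : ∀ n, 0 ≤ δ n) (hδ : Tendsto δ atTop (𝓝 0))
    (r : E → ℝ) (hrmeas : Measurable r) (hr0 : ∀ x, 0 ≤ r x) (hr1 : ∫ x, r x ∂μ = 1)
    (K : ℝ) (hK : 0 ≤ K) (hdec : Decorrelates μ X r K δ)
    (ν : Measure E) (hν : ν = μ.withDensity (fun x => ENNReal.ofReal (r x)))
    {d : ℕ} (g : ∀ j, (∀ i, 𝒳 (j + i)) → EuclideanSpace ℝ (Fin d))
    (hg : ∀ j, Measurable (g j))
    (S : ℕ → E → EuclideanSpace ℝ (Fin d))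
    (hS : ∀ n x, S n x = ∑ j ∈ Finset.range n, g j (Xbar X j x))
    (hSint : ∀ n, Integrable (S n) μ)
    (hSrint : ∀ n, Integrable (fun x => r x * ‖S n x‖) μ)
    (b : ℕ → ℝ) (hb0 : ∀ n, 0 < b n) (hb : Tendsto b atTop atTop)
    (m : ℕ) (hm : 1 ≤ m) (s : Fin m → ℝ) (hspos : ∀ k, 0 < s k) (hsmono : Monotone s) :
    (∀ t : Fin m → EuclideanSpace ℝ (Fin d),
      Tendsto (fun n : ℕ =>
        ‖(∫ x, (r x : ℂ) * Complex.exp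
              (((∑ k, ⟪t k, S (⌊(n : ℝ) * s k⌋₊) x⟫) / b n : ℝ) * Complex.I) ∂μ) -
            ∫ x, Complex.exp
              (((∑ k, ⟪t k, S (⌊(n : ℝ) * s k⌋₊) x⟫) / b n : ℝ) * Complex.I) ∂μ‖)
        atTop (𝓝 0)) ∧
    ((∃ P : Measure (Fin m → EuclideanSpace ℝ (Fin d)), IsProbabilityMeasure P ∧
        TendstoInDistribution μ
          (fun n x => fun k => (b n)⁻¹ • S (⌊(n : ℝ) * s k⌋₊) x) P) ↔
      (∃ P : Measure (Fin m → EuclideanSpace ℝ (Fin d)), IsProbabilityMeasure P ∧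
        TendstoInDistribution ν
          (fun n x => fun k => (b n)⁻¹ • S (⌊(n : ℝ) * s k⌋₊) x) P)) ∧
    (∀ P Q : Measure (Fin m → EuclideanSpace ℝ (Fin d)),
      IsProbabilityMeasure P → IsProbabilityMeasure Q →
      TendstoInDistribution μ (fun n x => fun k => (b n)⁻¹ • S (⌊(n : ℝ) * s k⌋₊) x) P →
      TendstoInDistribution ν (fun n x => fun k => (b n)⁻¹ • S (⌊(n : ℝ) * s k⌋₊) x) Q →
      P = Q) := by
  have hri : Integrable r μ := by
    by_contra hh
    rw [integral_undef hh] at hr1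
    norm_num at hr1
  have hXb : ∀ j, Measurable (Xbar X j) := fun j => measurable_pi_lambda _ fun i => hX _
  have hSm : ∀ n, Measurable (S n) := by
    intro n
    have : S n = fun x => ∑ j ∈ Finset.range n, g j (Xbar X j x) := funext (hS n)
    rw [this]
    exact Finset.measurable_fun_sum _ fun j _ => (hg j).comp (hXb j)
  have key := key_lemma μ X δ hδ r hr0 hr1 K hdec g hg S hS hSm hSint hSrint b hb0 hb m s hspos
  have hνp : IsProbabilityMeasure ν := by
    constructor
    rw [hν, withDensity_apply _ MeasurableSet.univ, Measure.restrict_univ,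
      ← ofReal_integral_eq_lintegral_ofReal hri (ae_of_all _ hr0), hr1, ENNReal.ofReal_one]
  have hνi : ∀ f : E → ℝ, ∫ x, f x ∂ν = ∫ x, r x * f x ∂μ := by
    intro f
    rw [hν, integral_withDensity_eq_integral_toReal_smul hrmeas.ennreal_ofReal
      (ae_of_all _ fun x => ENNReal.ofReal_lt_top)]
    refine integral_congr_ae (ae_of_all _ fun x => ?_)
    simp [ENNReal.toReal_ofReal (hr0 x)]
  have hWm : ∀ n : ℕ, Measurable
      (fun x => fun k => (b n)⁻¹ • S (⌊(n : ℝ) * s k⌋₊) x) := fun n =>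
    measurable_pi_lambda _ fun k => Measurable.fun_const_smul (hSm _) _
  have hdiff : ∀ f : (Fin m → EuclideanSpace ℝ (Fin d)) → ℝ,
      (∃ (C : ℝ), ∀ x y, dist (f x) (f y) ≤ C) → (∃ L, LipschitzWith L f) →
      Tendsto (fun n : ℕ => (∫ x, f (fun k => (b n)⁻¹ • S (⌊(n : ℝ) * s k⌋₊) x) ∂ν) -
        ∫ x, f (fun k => (b n)⁻¹ • S (⌊(n : ℝ) * s k⌋₊) x) ∂μ) atTop (𝓝 0) := by
    rintro f ⟨C, hC⟩ ⟨L, hL⟩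
    have := key (fun w => (f w : ℂ)) (C + ‖f 0‖) L (fun w => ?_) L.2 (fun w w' => ?_)
    · rw [tendsto_zero_iff_norm_tendsto_zero]
      refine this.congr fun n => ?_
      rw [hνi]
      have e1 : (∫ x, (r x : ℂ) * (f (fun k => (b n)⁻¹ • S (⌊(n : ℝ) * s k⌋₊) x) : ℂ) ∂μ)
          = ((∫ x, r x * f (fun k => (b n)⁻¹ • S (⌊(n : ℝ) * s k⌋₊) x) ∂μ : ℝ) : ℂ) := by
        rw [← integral_complex_ofReal]; simp
      rw [e1, integral_complex_ofReal, ← Complex.ofReal_sub, Complex.norm_real]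
    · rw [Complex.norm_real]
      have h1 := hC w 0
      rw [dist_eq_norm] at h1
      have h2 := norm_add_le (f w - f 0) (f 0)
      rw [sub_add_cancel] at h2
      linarith
    · rw [← Complex.ofReal_sub, Complex.norm_real, ← dist_eq_norm, ← dist_eq_norm]
      exact hL.dist_le_mul w w'
  have hiff : ∀ P : Measure (Fin m → EuclideanSpace ℝ (Fin d)), IsProbabilityMeasure P →
      (TendstoInDistribution μ (fun n x => fun k => (b n)⁻¹ • S (⌊(n : ℝ) * s k⌋₊) x) P ↔
      TendstoInDistribution ν (fun n x => fun k => (b n)⁻¹ • S (⌊(n : ℝ) * s k⌋₊) x) P) := by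
    intro P hP
    rw [tid_iff μ _ hWm P, tid_iff ν _ hWm P]
    refine forall_congr' fun f => forall_congr' fun hC => forall_congr' fun hL => ?_
    have hd := hdiff f hC hL
    constructor
    · intro h
      simpa using hd.add h
    · intro h
      simpa using h.sub hd
  refine ⟨fun t => ?_, ?_, ?_⟩
  · have := key (fun w => Complex.exp (((∑ k, ⟪t k, w k⟫ : ℝ) : ℂ) * Complex.I)) 1 (∑ k, ‖t k‖)
      (fun w => (Complex.norm_exp_ofReal_mul_I _).le) (by positivity) (fun w w' => ?_)
    · refine this.congr fun n => ?_
      have e : ∀ x, (∑ k, ⟪t k, (b n)⁻¹ • S (⌊(n : ℝ) * s k⌋₊) x⟫ : ℝ)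
          = (∑ k, ⟪t k, S (⌊(n : ℝ) * s k⌋₊) x⟫) / b n := by
        intro x
        simp_rw [real_inner_smul_right, ← Finset.mul_sum]
        rw [div_eq_inv_mul]
      simp_rw [e]
    · have e : ∀ a c : ℝ, ‖Complex.exp ((a : ℂ) * Complex.I) - Complex.exp ((c : ℂ) * Complex.I)‖
          ≤ |a - c| := by
        intro a c
        have h1 : Complex.exp ((a : ℂ) * Complex.I) - Complex.exp ((c : ℂ) * Complex.I)
            = Complex.exp ((c : ℂ) * Complex.I) *
              (Complex.exp (Complex.I * ((a - c : ℝ) : ℂ)) - 1) := by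
          rw [mul_sub, ← Complex.exp_add, mul_one]
          congr 2
          push_cast
          ring
        rw [h1, norm_mul, Complex.norm_exp_ofReal_mul_I, one_mul]
        exact Real.norm_exp_I_mul_ofReal_sub_one_le
      refine (e _ _).trans ?_
      rw [← Finset.sum_sub_distrib, Finset.sum_mul]
      refine (Finset.abs_sum_le_sum_abs _ _).trans (Finset.sum_le_sum fun k _ => ?_)
      rw [← inner_sub_right]
      refine (abs_real_inner_le_norm _ _).trans ?_
      gcongr
      exact norm_le_pi_norm (w - w') k
  · exact exists_congr fun P => and_congr_right fun hP => hiff P hP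
  · intro P Q hP hQ h1 h2
    refine ext_of_forall_integral_eq_of_IsFiniteMeasure fun f => ?_
    exact tendsto_nhds_unique ((hiff P hP).1 h1 f) (h2 f)
end
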